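/- Let Ω₀ be a smooth, origin-symmetric, strictly convex body in ℝⁿ (n ≥ 2), let f : S^{n−1} → (0,∞) be smooth and even, let φ : (0,∞) → (0,∞) be smooth, and assume Condition (i) or Condition (ii) holds. Let Ω_t be a smooth, origin-symmetric, strictly convex solution of the flow on [0,∞) with initial body Ω₀ and support functions h(·,t). Then there exists a constant C > 0, independent of t, such that the Gauss curvature satisfies κ(x,t) = 1/det(∇²h + hI)(x,t) ≤ C for all (x,t) ∈ S^{n−1} × (0,∞). -/

import Mathlib

/-! The bound on `κ` follows from two-sided bounds on the support functions `h(·, t)` and a maximum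
principle for the speed `Φ = h - ∂ₜh = η (f / φ(1/h)) |∇h|ⁿ κ`.

*Lower bound on `h`.* The entropy `∫ log ρ`, with `ρ` the radial function, is conserved: its first
variation is the integral of `∂ₜh / h` against the cone measure `h / (|∇h|ⁿ κ) dx`, and the
normalisation `η` makes this integral vanish (`FlowData.integral_dt_cone`). Instead of
differentiating `ρ`, a comparison of gauges shows that the entropy varies quadratically in the time
increment (`IsSupportFn.entropy_sub_le`, `FlowData.entropy_quadratic`), so it is constant. The body
is symmetric, so it lies in the slab `|⟪x, ·⟫| ≤ h(x)`, and its entropy is at most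
`|S^{n-1}| log h(x) + C`; this bounds `h(x)` from below (`FlowData.exists_lower`).

*Upper bound on `h`.* By the arithmetic-geometric mean inequality the functional `∫ f ℜ(1/h)` is
monotone along the flow (`FlowData.orlicz_mono`). If the farthest boundary point of the body is `L θ`
with `θ` a unit vector, then `h ≥ L |⟪θ, ·⟫|` by symmetry, so `h` is large away from a thin band
around a great subsphere. A very large `L` would therefore push the functional past its value at
time `1` (`FlowData.exists_upper_I` and `FlowData.exists_upper_II`).

*Bound on the speed.* Suppose `Φ` first touches `K (h - ε)` at some time after `1`, at a point `x`.
The spatial conditions there (`touching_conditions`) compare the Hessian of `∂ₜh` with that of `h`,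
and the time condition bounds `∂ₜΦ` below. Inserted into the logarithmic time derivative of the flow
equation (`FlowData.log_identity`), they bound the trace of `(∇²h + hI)⁻¹` at `x` by a constant
independent of `K` (`FlowData.trace_bound`). Hence `κ`, and with it `Φ = K (h - ε)`, is bounded there
independently of `K`, which is impossible for large `K` (`FlowData.exists_speed_bound`). As `h` and
`η f / φ` are bounded below, a bound on `Φ` is a bound on `κ` for `t ≥ 1`; the interval `[0, 1]` is
handled by compactness.
-/

noncomputable section

open Metric MeasureTheory Set Filter Topology
open scoped RealInnerProductSpace NNReal

/-- Abbreviation for `n`-dimensional Euclidean space. -/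
abbrev Euc (n : ℕ) : Type := EuclideanSpace ℝ (Fin n)

/-- The unit sphere `S^{n-1}` in `ℝⁿ`, as a set. -/
abbrev USphere (n : ℕ) : Set (Euc n) := Metric.sphere (0 : Euc n) 1

/-- The surface (spherical Lebesgue) measure on the unit sphere. -/
def sphMeasure (n : ℕ) : Measure (USphere n) :=
  (volume : Measure (Euc n)).toSphere

/-- Total surface measure `|S^{n-1}|` of the unit sphere. -/
def sphArea (n : ℕ) : ℝ := (sphMeasure n Set.univ).toReal

/-- Integral over the unit sphere with respect to the spherical Lebesgue measure. -/
def sphInt (n : ℕ) (g : Euc n → ℝ) : ℝ :=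
  ∫ x : USphere n, g x ∂(sphMeasure n)

/-- The covariant (spherical) gradient on `S^{n-1}` of the restriction of `F`,
i.e. the tangential component of the Euclidean gradient of `F`. -/
def sphGrad (n : ℕ) (F : Euc n → ℝ) (x : Euc n) : Euc n :=
  gradient F x - ⟪gradient F x, x⟫ • x

/-- `√(|∇h|² + h²)` for the (1-homogeneous extension of the) function `F` at `x`. -/
def radTerm (n : ℕ) (F : Euc n → ℝ) (x : Euc n) : ℝ :=
  Real.sqrt (‖sphGrad n F x‖ ^ 2 + F x ^ 2)

/-- The Euclidean Hessian operator of `F` at `x`. For a positively 1-homogeneous `F`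
this operator kills `x` and restricts on `x^⊥` to the matrix `∇²h + hI` of the
spherical Hessian. -/
def hessOp (n : ℕ) (F : Euc n → ℝ) (x : Euc n) : Euc n →L[ℝ] Euc n :=
  fderiv ℝ (gradient F) x

/-- `det(∇²h + hI)` at `x ∈ S^{n-1}`: the determinant of the restriction of the Euclidean
Hessian of the 1-homogeneous extension to `x^⊥`, computed as the determinant of
`Hess F + x ⊗ x` on all of `ℝⁿ` (the Hessian of a 1-homogeneous function kills `x`). -/
def sphDet (n : ℕ) (F : Euc n → ℝ) (x : Euc n) : ℝ :=
  LinearMap.det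
    ((hessOp n F x + (innerSL ℝ x).smulRight x : Euc n →L[ℝ] Euc n) : Euc n →ₗ[ℝ] Euc n)

/-- `F` is the (1-homogeneously extended) support function of a smooth strictly convex
body with the origin in its interior: it is smooth away from the origin, positively
1-homogeneous, positive, and `∇²h + hI` is positive definite on each tangent space. -/
structure IsSupportFn (n : ℕ) (F : Euc n → ℝ) : Prop where
  smooth : ContDiffOn ℝ (⊤ : ℕ∞) F {(0 : Euc n)}ᶜ
  homog : ∀ c : ℝ, 0 < c → ∀ x : Euc n, F (c • x) = c * F x
  pos : ∀ x ∈ USphere n, 0 < F x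
  posdef : ∀ x ∈ USphere n, ∀ v : Euc n, v ≠ 0 → ⟪x, v⟫ = 0 →
    0 < ⟪v, hessOp n F x v⟫

/-- The convex body determined by the support function `F`. -/
def bodyOf (n : ℕ) (F : Euc n → ℝ) : Set (Euc n) :=
  {y | ∀ x ∈ USphere n, ⟪x, y⟫ ≤ F x}

/-- The radial function of the convex body with support function `F`. -/
def radialFn (n : ℕ) (F : Euc n → ℝ) (u : Euc n) : ℝ :=
  sSup {r : ℝ | 0 < r ∧ r • u ∈ bodyOf n F}

/-- The normalization factor `η` of the flow. -/
def flowEta (n : ℕ) (f : Euc n → ℝ) (φ : ℝ → ℝ) (h : Euc n → ℝ) : ℝ :=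
  sphArea n / sphInt n (fun x => f x / φ (1 / h x))

/-- `H : ℝ → Euc n → ℝ` is (the family of support functions of) a smooth, origin-symmetric,
strictly convex solution of the flow on the time interval `J`. -/
structure IsFlowSol (n : ℕ) (f : Euc n → ℝ) (φ : ℝ → ℝ) (J : Set ℝ)
    (H : ℝ → Euc n → ℝ) : Prop where
  smooth : ContDiffOn ℝ (⊤ : ℕ∞) (fun p : ℝ × Euc n => H p.1 p.2) (J ×ˢ {(0 : Euc n)}ᶜ)
  body : ∀ t ∈ J, IsSupportFn n (H t)
  symm : ∀ t ∈ J, ∀ x : Euc n, H t (-x) = H t x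
  eqn : ∀ t ∈ J, ∀ x ∈ USphere n,
    HasDerivWithinAt (fun s => H s x)
      (H t x - flowEta n f φ (H t) * f x * radTerm n (H t) x ^ n /
        (φ (1 / H t x) * sphDet n (H t) x)) J t

/-- Condition (i) of the Orlicz-Aleksandrov flow theorem. -/
def CondI (n : ℕ) (f : Euc n → ℝ) (φ : ℝ → ℝ) (h₀ : Euc n → ℝ) : Prop :=
  ∃ R : ℝ → ℝ, (∀ s ∈ Ioi (0 : ℝ), 0 < R s) ∧ StrictMonoOn R (Ioi 0) ∧
    Tendsto R (𝓝[>] (0 : ℝ)) (𝓝 0) ∧ Tendsto R atTop atTop ∧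
    (∀ s ∈ Ioi (0 : ℝ), IntegrableOn (fun t => 1 / (t * φ t)) (Ioo 0 s) ∧
      R s = ∫ t in Ioo (0 : ℝ) s, 1 / (t * φ t)) ∧
    (∀ s ∈ Ioi (0 : ℝ), HasDerivAt R (1 / (s * φ s)) s ∧ 1 / (s * φ s) ≠ 0) ∧
    ∃ Chat : ℝ, 0 < Chat ∧
      (∀ θ ∈ USphere n,
        sphInt n (fun x => f x * R (1 / |⟪x, θ⟫|)) ≤ Chat) ∧
      Chat < sphInt n (fun x => f x * R (1 / h₀ x))

/-- Condition (ii) of the Orlicz-Aleksandrov flow theorem. -/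
def CondII (φ : ℝ → ℝ) : Prop :=
  ∃ R : ℝ → ℝ, (∀ s ∈ Ioi (0 : ℝ), 0 < R s) ∧ StrictAntiOn R (Ioi 0) ∧
    Tendsto R (𝓝[>] (0 : ℝ)) atTop ∧ Tendsto R atTop (𝓝 0) ∧
    (∀ s ∈ Ioi (0 : ℝ), IntegrableOn (fun t => 1 / (t * φ t)) (Ioi s) ∧
      R s = ∫ t in Ioi s, 1 / (t * φ t)) ∧
    (∀ s ∈ Ioi (0 : ℝ), HasDerivAt R (-(1 / (s * φ s))) s ∧ 1 / (s * φ s) ≠ 0)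

/-! ### Gradients and Hessians of functions smooth away from the origin -/

lemma inner_gradient {n : ℕ} (F : Euc n → ℝ) (x v : Euc n) :
    ⟪gradient F x, v⟫ = fderiv ℝ F x v := by
  rw [← toDual_gradient]; simp

lemma gradient_eq_toDual {n : ℕ} (F : Euc n → ℝ) :
    gradient F = fun x => (InnerProductSpace.toDual ℝ (Euc n)).symm (fderiv ℝ F x) := rfl

section SmoothOff

variable {n : ℕ} {F : Euc n → ℝ}

lemma SmoothOff.contDiffAt (hF : ContDiffOn ℝ (⊤ : ℕ∞) F {(0 : Euc n)}ᶜ) {x : Euc n} (hx : x ≠ 0) :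
    ContDiffAt ℝ (⊤ : ℕ∞) F x :=
  hF.contDiffAt (isOpen_compl_singleton.mem_nhds hx)

lemma SmoothOff.gradient_contDiffAt (hF : ContDiffOn ℝ (⊤ : ℕ∞) F {(0 : Euc n)}ᶜ) {x : Euc n}
    (hx : x ≠ 0) : ContDiffAt ℝ (⊤ : ℕ∞) (gradient F) x := by
  rw [gradient_eq_toDual]
  exact (InnerProductSpace.toDual ℝ (Euc n)).symm.contDiff.contDiffAt.comp x
    ((SmoothOff.contDiffAt hF hx).fderiv_right (m := (⊤ : ℕ∞)) (by simp))

lemma SmoothOff.hasFDerivAt_gradient (hF : ContDiffOn ℝ (⊤ : ℕ∞) F {(0 : Euc n)}ᶜ) {x : Euc n}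
    (hx : x ≠ 0) : HasFDerivAt (gradient F) (hessOp n F x) x :=
  ((SmoothOff.gradient_contDiffAt hF hx).differentiableAt (by simp)).hasFDerivAt

lemma SmoothOff.inner_hessOp (hF : ContDiffOn ℝ (⊤ : ℕ∞) F {(0 : Euc n)}ᶜ) {x : Euc n}
    (hx : x ≠ 0) (v w : Euc n) : ⟪hessOp n F x v, w⟫ = fderiv ℝ (fderiv ℝ F) x v w := by
  have h1 : DifferentiableAt ℝ (fderiv ℝ F) x :=
    ((SmoothOff.contDiffAt hF hx).fderiv_right (m := (⊤ : ℕ∞)) (by simp)).differentiableAt (by simp)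
  have h2 : HasFDerivAt (gradient F) _ x :=
    ((InnerProductSpace.toDual ℝ (Euc n)).symm.toContinuousLinearEquiv.hasFDerivAt
      (x := fderiv ℝ F x)).comp x h1.hasFDerivAt
  rw [hessOp, h2.fderiv]
  simp

lemma SmoothOff.hessOp_symm (hF : ContDiffOn ℝ (⊤ : ℕ∞) F {(0 : Euc n)}ᶜ) {x : Euc n}
    (hx : x ≠ 0) (v w : Euc n) : ⟪hessOp n F x v, w⟫ = ⟪v, hessOp n F x w⟫ := by
  rw [SmoothOff.inner_hessOp hF hx, real_inner_comm, SmoothOff.inner_hessOp hF hx]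
  exact (((SmoothOff.contDiffAt hF hx).of_le
    (WithTop.coe_le_coe.2 (le_top : (2 : ℕ∞) ≤ ⊤))).isSymmSndFDerivAt (by simp)) v w

/-- First derivative along a line. -/
lemma SmoothOff.hasDerivAt_line (hF : ContDiffOn ℝ (⊤ : ℕ∞) F {(0 : Euc n)}ᶜ) (x v : Euc n)
    {s : ℝ} (hx : x + s • v ≠ 0) :
    HasDerivAt (fun s : ℝ => F (x + s • v)) ⟪gradient F (x + s • v), v⟫ s := by
  rw [inner_gradient]
  have h1 : HasDerivAt (fun s : ℝ => x + s • v) v s := by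
    simpa using ((hasDerivAt_id s).smul_const v).const_add x
  exact ((SmoothOff.contDiffAt hF hx).differentiableAt (by simp)).hasFDerivAt.comp_hasDerivAt s h1

/-- Second derivative along a line. -/
lemma SmoothOff.hasDerivAt_line2 (hF : ContDiffOn ℝ (⊤ : ℕ∞) F {(0 : Euc n)}ᶜ) (x v w : Euc n)
    {s : ℝ} (hx : x + s • v ≠ 0) :
    HasDerivAt (fun s : ℝ => ⟪gradient F (x + s • v), w⟫) ⟪hessOp n F (x + s • v) v, w⟫ s := by
  have h1 : HasDerivAt (fun s : ℝ => x + s • v) v s := by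
    simpa using ((hasDerivAt_id s).smul_const v).const_add x
  have h2 := (SmoothOff.hasFDerivAt_gradient hF hx).comp_hasDerivAt s h1
  simpa using h2.inner ℝ (hasDerivAt_const s w)

end SmoothOff

/-! ### Geometry of a single support function -/

namespace IsSupportFn

variable {n : ℕ} {h : Euc n → ℝ}

lemma pos' (hh : IsSupportFn n h) {x : Euc n} (hx : x ≠ 0) : 0 < h x := by
  have h0 : 0 < ‖x‖ := norm_pos_iff.2 hx
  have h1 : x = ‖x‖ • (‖x‖⁻¹ • x) := by rw [smul_smul, mul_inv_cancel₀ h0.ne', one_smul]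
  rw [h1, hh.homog _ h0]
  refine mul_pos h0 (hh.pos _ ?_)
  simp [norm_smul, h0.ne']

/-- Euler's relation for the 1-homogeneous function `h`. -/
lemma euler (hh : IsSupportFn n h) {x : Euc n} (hx : x ≠ 0) : ⟪gradient h x, x⟫ = h x := by
  have h1 := SmoothOff.hasDerivAt_line hh.smooth x x (s := 0) (by simpa using hx)
  simp only [zero_smul, add_zero] at h1
  have h2 : HasDerivAt (fun s : ℝ => (1 + s) * h x) (h x) 0 := by
    simpa using ((hasDerivAt_id (0:ℝ)).const_add 1).mul_const (h x)
  refine h1.unique (h2.congr_of_eventuallyEq ?_)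
  filter_upwards [Ioi_mem_nhds (show (-1:ℝ) < 0 by norm_num)] with s hs
  rw [← hh.homog _ (by linarith [mem_Ioi.1 hs])]
  simp [add_smul]

lemma gradient_smul (hh : IsSupportFn n h) {x : Euc n} (hx : x ≠ 0) {c : ℝ} (hc : 0 < c) :
    gradient h (c • x) = gradient h x := by
  refine ext_inner_right ℝ fun v => ?_
  have hcx : c • x ≠ 0 := smul_ne_zero hc.ne' hx
  have h1 := SmoothOff.hasDerivAt_line hh.smooth (c • x) (c • v) (s := 0) (by simpa using hcx)
  have h2 := (SmoothOff.hasDerivAt_line hh.smooth x v (s := 0) (by simpa using hx)).const_mul c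
  have h3 : (fun s : ℝ => h (c • x + s • c • v)) = fun s => c * h (x + s • v) := by
    funext s
    rw [← hh.homog c hc, smul_add, smul_comm]
  rw [h3] at h1
  have := h1.unique h2
  simp only [zero_smul, add_zero, inner_smul_right] at this
  exact mul_left_cancel₀ hc.ne' this

/-- The Hessian of a 1-homogeneous function kills the radial direction. -/
lemma hessOp_self (hh : IsSupportFn n h) {x : Euc n} (hx : x ≠ 0) : hessOp n h x x = 0 := by
  refine ext_inner_right ℝ fun v => ?_
  have h1 := SmoothOff.hasDerivAt_line2 hh.smooth x x v (s := 0) (by simpa using hx)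
  simp only [zero_smul, add_zero] at h1
  rw [inner_zero_left]
  refine h1.unique ((hasDerivAt_const (0:ℝ) ⟪gradient h x, v⟫).congr_of_eventuallyEq ?_)
  filter_upwards [Ioi_mem_nhds (show (-1:ℝ) < 0 by norm_num)] with s hs
  rw [← hh.gradient_smul hx (c := 1 + s) (by linarith [mem_Ioi.1 hs])]
  simp [add_smul]

lemma hessOp_smul (hh : IsSupportFn n h) {x : Euc n} (hx : x ≠ 0) {c : ℝ} (hc : 0 < c)
    (v : Euc n) : hessOp n h (c • x) (c • v) = hessOp n h x v := by
  refine ext_inner_right ℝ fun w => ?_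
  have hcx : c • x ≠ 0 := smul_ne_zero hc.ne' hx
  have h1 := SmoothOff.hasDerivAt_line2 hh.smooth (c • x) (c • v) w (s := 0) (by simpa using hcx)
  have h2 := SmoothOff.hasDerivAt_line2 hh.smooth x v w (s := 0) (by simpa using hx)
  simp only [zero_smul, add_zero] at h1 h2
  refine h1.unique (h2.congr_of_eventuallyEq ?_)
  have hc0 : ContinuousAt (fun s : ℝ => x + s • v) 0 := by fun_prop
  filter_upwards [hc0.eventually_ne (show x + (0 : ℝ) • v ≠ 0 by simpa using hx)] with s hs
  rw [← hh.gradient_smul hs hc, smul_add, smul_comm c s v]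

lemma posdef' (hh : IsSupportFn n h) {x : Euc n} (hx : x ≠ 0) {v : Euc n}
    (hv : ∀ a : ℝ, v ≠ a • x) : 0 < ⟪hessOp n h x v, v⟫ := by
  have h0 : 0 < ‖x‖ := norm_pos_iff.2 hx
  set u := ‖x‖⁻¹ • x with hu
  have hux : x = ‖x‖ • u := by rw [hu, smul_smul, mul_inv_cancel₀ h0.ne', one_smul]
  have hun : ‖u‖ = 1 := by simp [hu, norm_smul, h0.ne']
  have hu0 : u ≠ 0 := by intro h; simp [h] at hun
  set w := v - ⟪u, v⟫ • u with hw
  have hw0 : w ≠ 0 := by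
    intro h
    apply hv (⟪u, v⟫ * ‖x‖⁻¹)
    rw [mul_smul, ← hu, ← sub_eq_zero, ← h]
  have hwu : ⟪u, w⟫ = 0 := by
    simp [hw, inner_sub_right, inner_smul_right, hun]
  have h1 := hh.posdef u (by simpa using hun) w hw0 hwu
  have h2 : hessOp n h x v = ‖x‖⁻¹ • hessOp n h u v := by
    have := hh.hessOp_smul hu0 h0 (‖x‖⁻¹ • v)
    rw [← hux, smul_smul, mul_inv_cancel₀ h0.ne', one_smul] at this
    rw [this, map_smul]
  have hvw : v = w + ⟪u, v⟫ • u := by simp [hw]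
  have h3 : ⟪hessOp n h u v, v⟫ = ⟪w, hessOp n h u w⟫ := by
    have e1 : hessOp n h u v = hessOp n h u w := by
      rw [hw, map_sub, map_smul, hh.hessOp_self hu0]; simp
    rw [SmoothOff.hessOp_symm hh.smooth hu0, e1]
    nth_rewrite 1 [hvw]
    rw [inner_add_left, inner_smul_left, ← SmoothOff.hessOp_symm hh.smooth hu0 u w, hh.hessOp_self hu0]
    simp
  rw [h2, inner_smul_left, h3]
  simpa using mul_pos (inv_pos.2 h0) h1

/-- The supporting inequality `⟪∇h(x), y⟫ < h(y)`, strict off the ray through `x`. -/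
lemma inner_gradient_lt (hh : IsSupportFn n h) {x y : Euc n} (hx : x ≠ 0) (hy : y ≠ 0)
    (hxy : ∀ c : ℝ, 0 < c → y ≠ c • x) : ⟪gradient h x, y⟫ < h y := by
  by_cases hdep : ∃ c : ℝ, y = c • x
  · obtain ⟨c, rfl⟩ := hdep
    have hc : c ≤ 0 := not_lt.1 fun hc => hxy c hc rfl
    rw [inner_smul_right, hh.euler hx]
    have := hh.pos' hx
    exact (mul_nonpos_of_nonpos_of_nonneg hc this.le).trans_lt (hh.pos' hy)
  · push Not at hdep
    have hz : ∀ s : ℝ, x + s • (y - x) ≠ 0 := by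
      intro s hs
      by_cases hs0 : s = 0
      · simp [hs0, hx] at hs
      · apply hdep (s⁻¹ * (s - 1))
        have : s • y = (s - 1) • x := by
          rw [smul_sub] at hs
          rw [sub_smul, one_smul, ← sub_eq_zero, ← hs]; abel
        rw [mul_smul, ← this, smul_smul, inv_mul_cancel₀ hs0, one_smul]
    have hd1 : ∀ s : ℝ, HasDerivAt (fun s : ℝ => h (x + s • (y - x)))
        ⟪gradient h (x + s • (y - x)), y - x⟫ s := fun s =>
      SmoothOff.hasDerivAt_line hh.smooth x (y - x) (hz s)
    have hd2 : ∀ s : ℝ, HasDerivAt (fun s : ℝ => ⟪gradient h (x + s • (y - x)), y - x⟫)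
        ⟪hessOp n h (x + s • (y - x)) (y - x), y - x⟫ s := fun s =>
      SmoothOff.hasDerivAt_line2 hh.smooth x (y - x) (y - x) (hz s)
    have hconv : StrictConvexOn ℝ univ (fun s : ℝ => h (x + s • (y - x))) := by
      refine strictConvexOn_of_deriv2_pos' convex_univ
        (fun s _ => (hd1 s).continuousAt.continuousWithinAt) fun s _ => ?_
      have e : deriv (fun s : ℝ => h (x + s • (y - x))) = fun s => _ := funext fun s => (hd1 s).deriv
      simp only [Function.iterate_succ, Function.iterate_zero, Function.comp, id]
      rw [e, (hd2 s).deriv]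
      refine hh.posdef' (hz s) fun a ha => ?_
      -- `y - x` parallel to `x + s (y - x)` would make `y` a multiple of `x`
      have h1 : (1 - a * s) • y = (1 - a * s + a) • x := by
        have : y - x - a • (x + s • (y - x)) = 0 := sub_eq_zero.2 ha
        rw [← sub_eq_zero, ← this]; module
      by_cases h2 : 1 - a * s = 0
      · rw [h2, zero_smul, zero_add] at h1
        have ha0 : a = 0 := by
          rcases smul_eq_zero.1 h1.symm with h | h
          · exact h
          · exact absurd h hx
        simp [ha0] at h2
      · apply hdep ((1 - a * s)⁻¹ * (1 - a * s + a))
        rw [mul_smul, ← h1, smul_smul, inv_mul_cancel₀ h2, one_smul]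
    have := hconv.lt_slope_of_hasDerivAt (mem_univ 0) (mem_univ 1) one_pos (hd1 0)
    simp only [slope_def_field, zero_smul, add_zero, one_smul, add_sub_cancel, sub_zero, div_one,
      inner_sub_right, hh.euler hx] at this
    linarith

lemma inner_gradient_le (hh : IsSupportFn n h) {x y : Euc n} (hx : x ≠ 0) (hy : y ≠ 0) :
    ⟪gradient h x, y⟫ ≤ h y := by
  by_cases hxy : ∃ c : ℝ, 0 < c ∧ y = c • x
  · obtain ⟨c, hc, rfl⟩ := hxy
    rw [inner_smul_right, hh.euler hx, hh.homog c hc]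
  · push Not at hxy
    exact (hh.inner_gradient_lt hx hy hxy).le

lemma gradient_ne_zero (hh : IsSupportFn n h) {x : Euc n} (hx : x ≠ 0) : gradient h x ≠ 0 := by
  intro h0
  have := hh.euler hx
  rw [h0, inner_zero_left] at this
  exact (hh.pos' hx).ne this

lemma radTerm_eq (hh : IsSupportFn n h) {x : Euc n} (hx : x ∈ USphere n) :
    radTerm n h x = ‖gradient h x‖ := by
  have hx1 : ‖x‖ = 1 := by simpa using hx
  have hx0 : x ≠ 0 := by intro h; simp [h] at hx1
  rw [radTerm, sphGrad, hh.euler hx0, norm_sub_sq_real, inner_smul_right, hh.euler hx0, norm_smul,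
    hx1]
  rw [show ‖gradient h x‖ ^ 2 - 2 * (h x * h x) + (‖h x‖ * 1) ^ 2 + h x ^ 2 = ‖gradient h x‖ ^ 2 by
    rw [mul_one, Real.norm_eq_abs, sq_abs]; ring]
  exact Real.sqrt_sq (norm_nonneg _)

end IsSupportFn

/-! ### The Gauss-curvature determinant and the cone measure -/

/-- The operator `Hess F + x ⊗ x` whose determinant is `sphDet`. -/
def aOp (n : ℕ) (F : Euc n → ℝ) (x : Euc n) : Euc n →L[ℝ] Euc n :=
  hessOp n F x + (innerSL ℝ x).smulRight x

lemma aOp_apply {n : ℕ} (F : Euc n → ℝ) (x v : Euc n) :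
    aOp n F x v = hessOp n F x v + ⟪x, v⟫ • x := by simp [aOp]

lemma sphDet_eq {n : ℕ} (F : Euc n → ℝ) (x : Euc n) : sphDet n F x = (aOp n F x).det := rfl

lemma norm_of_mem {n : ℕ} {x : Euc n} (hx : x ∈ USphere n) : ‖x‖ = 1 := by simpa using hx

lemma ne_zero_of_mem {n : ℕ} {x : Euc n} (hx : x ∈ USphere n) : x ≠ 0 := by
  intro h; have := norm_of_mem hx; simp [h] at this

namespace IsSupportFn

variable {n : ℕ} {h : Euc n → ℝ}

/-- `∇²h + hI` (extended by the identity on the normal direction) diagonalises in an orthonormal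
basis with positive eigenvalues. -/
lemma exists_eigenbasis (hh : IsSupportFn n h) {x : Euc n} (hx : x ∈ USphere n) :
    ∃ (e : OrthonormalBasis (Fin n) ℝ (Euc n)) (l : Fin n → ℝ), (∀ i, 0 < l i) ∧
      (∀ i, aOp n h x (e i) = l i • e i) ∧ sphDet n h x = ∏ i, l i := by
  have hx0 := ne_zero_of_mem hx
  have hx1 := norm_of_mem hx
  have hsymm : ((aOp n h x : Euc n →L[ℝ] Euc n) : Euc n →ₗ[ℝ] Euc n).IsSymmetric := by
    intro v w
    simp only [ContinuousLinearMap.coe_coe, aOp_apply, inner_add_left, inner_add_right,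
      inner_smul_left, inner_smul_right, SmoothOff.hessOp_symm hh.smooth hx0 v w]
    simp [real_inner_comm x v, mul_comm]
  have hfr : Module.finrank ℝ (Euc n) = n := by simp
  have heig : ∀ i, aOp n h x (hsymm.eigenvectorBasis hfr i) =
      hsymm.eigenvalues hfr i • hsymm.eigenvectorBasis hfr i := fun i =>
    hsymm.apply_eigenvectorBasis hfr i
  refine ⟨hsymm.eigenvectorBasis hfr, hsymm.eigenvalues hfr, fun i => ?_, heig, ?_⟩
  · set v := hsymm.eigenvectorBasis hfr i with hv
    have hv1 : ‖v‖ = 1 := (hsymm.eigenvectorBasis hfr).orthonormal.1 i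
    have h1 : hsymm.eigenvalues hfr i = ⟪aOp n h x v, v⟫ := by
      rw [heig, inner_smul_left, ← hv, real_inner_self_eq_norm_sq, hv1]; simp
    rw [h1, aOp_apply, inner_add_left, inner_smul_left]
    by_cases hp : ∃ a : ℝ, v = a • x
    · obtain ⟨a, ha⟩ := hp
      have ha0 : a ≠ 0 := by rintro rfl; rw [ha] at hv1; simp at hv1
      rw [ha, map_smul, hh.hessOp_self hx0]
      simp only [smul_zero, inner_zero_left, inner_smul_right, real_inner_self_eq_norm_sq, hx1]
      simpa using mul_self_pos.2 ha0
    · push Not at hp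
      have := hh.posdef' hx0 hp
      have h2 : 0 ≤ (starRingEnd ℝ) ⟪x, v⟫ * ⟪x, v⟫ := by simpa using mul_self_nonneg ⟪x, v⟫
      linarith
  · rw [sphDet]
    simpa [aOp] using hsymm.det_eq_prod_eigenvalues hfr

lemma sphDet_pos (hh : IsSupportFn n h) {x : Euc n} (hx : x ∈ USphere n) : 0 < sphDet n h x := by
  obtain ⟨e, l, hl, -, hd⟩ := hh.exists_eigenbasis hx
  rw [hd]; exact Finset.prod_pos fun i _ => hl i

/-- The derivative of `y ↦ ‖y‖ ∇h(y)`. -/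
def coneDeriv (n : ℕ) (h : Euc n → ℝ) (y : Euc n) : Euc n →L[ℝ] Euc n :=
  ‖y‖ • hessOp n h y + ((‖y‖⁻¹ • innerSL ℝ y).smulRight (gradient h y))

lemma coneDeriv_apply (y v : Euc n) : coneDeriv n h y v =
    ‖y‖ • hessOp n h y v + (‖y‖⁻¹ * ⟪y, v⟫) • gradient h y := by simp [coneDeriv]

lemma hasFDerivAt_cone (hh : IsSupportFn n h) {y : Euc n} (hy : y ≠ 0) :
    HasFDerivAt (fun y => ‖y‖ • gradient h y) (coneDeriv n h y) y := by
  have h1 : HasFDerivAt (fun y : Euc n => ‖y‖) (‖y‖⁻¹ • innerSL ℝ y) y := by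
    have h0 : ‖y‖ ^ 2 ≠ 0 := by simpa using hy
    have := (hasStrictFDerivAt_norm_sq y).hasFDerivAt.sqrt h0
    simp only [Real.sqrt_sq (norm_nonneg _)] at this
    convert! this using 1
    ext v
    have h3 : ‖y‖ ≠ 0 := by simpa using hy
    simp
    field_simp
  exact h1.smul (SmoothOff.hasFDerivAt_gradient hh.smooth hy)

lemma coneDeriv_smul (hh : IsSupportFn n h) {y : Euc n} (hy : y ≠ 0) {c : ℝ} (hc : 0 < c) :
    coneDeriv n h (c • y) = coneDeriv n h y := by
  ext1 v
  have h1 := hh.hessOp_smul hy hc (c⁻¹ • v)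
  rw [smul_smul, mul_inv_cancel₀ hc.ne', one_smul, map_smul] at h1
  rw [coneDeriv_apply, coneDeriv_apply, h1, hh.gradient_smul hy hc, norm_smul, inner_smul_left,
    Real.norm_of_nonneg hc.le, smul_smul]
  have : ‖y‖ ≠ 0 := by simpa using hy
  congr 2
  · field_simp
  · simp; field_simp

/-- The Jacobian determinant of `y ↦ ‖y‖ ∇h(y)` on the unit sphere, by factoring out
a transvection. -/
lemma det_coneDeriv (hh : IsSupportFn n h) {x : Euc n} (hx : x ∈ USphere n) :
    (coneDeriv n h x).det = h x * sphDet n h x := by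
  have hx0 := ne_zero_of_mem hx
  have hx1 := norm_of_mem hx
  have key : ((coneDeriv n h x : Euc n →L[ℝ] Euc n) : Euc n →ₗ[ℝ] Euc n) =
      (LinearMap.transvection ((innerSL ℝ x : Euc n →L[ℝ] ℝ) : Euc n →ₗ[ℝ] ℝ)
        (gradient h x - x)) ∘ₗ ((aOp n h x : Euc n →L[ℝ] Euc n) : Euc n →ₗ[ℝ] Euc n) := by
    ext1 v
    have hz : ⟪x, hessOp n h x v⟫ = 0 := by
      rw [← SmoothOff.hessOp_symm hh.smooth hx0, hh.hessOp_self hx0, inner_zero_left]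
    simp only [ContinuousLinearMap.coe_coe, coneDeriv_apply, LinearMap.comp_apply,
      LinearMap.transvection.apply, aOp_apply, innerSL_apply_apply, inner_add_right,
      inner_smul_right, hz, real_inner_self_eq_norm_sq, hx1]
    simp only [one_smul, inv_one, one_mul, one_pow, mul_one, zero_add, smul_sub]
    abel
  rw [ContinuousLinearMap.det, key, LinearMap.det_comp, LinearMap.transvection.det, sphDet_eq,
    ContinuousLinearMap.det]
  congr 1
  simp only [ContinuousLinearMap.coe_coe, innerSL_apply_apply, inner_sub_right,
    real_inner_self_eq_norm_sq, hx1]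
  rw [real_inner_comm, hh.euler hx0]; ring

/-- Injectivity of `y ↦ ‖y‖ ∇h(y)`: equality in two supporting inequalities forces the points
onto one ray. -/
lemma cone_injOn (hh : IsSupportFn n h) :
    InjOn (fun y => ‖y‖ • gradient h y) {(0 : Euc n)}ᶜ := by
  intro y hy z hz hyz
  simp only [mem_compl_iff, mem_singleton_iff] at hy hz hyz
  have hny : 0 < ‖y‖ := norm_pos_iff.2 hy
  have hnz : 0 < ‖z‖ := norm_pos_iff.2 hz
  have h1 : ‖y‖ * ⟪gradient h y, z⟫ = ‖z‖ * h z := by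
    rw [← hh.euler hz, ← real_inner_smul_left, ← real_inner_smul_left, hyz]
  have h2 : ‖z‖ * ⟪gradient h z, y⟫ = ‖y‖ * h y := by
    rw [← hh.euler hy, ← real_inner_smul_left, ← real_inner_smul_left, hyz]
  have h3 := hh.inner_gradient_le hy hz
  have h4 := hh.inner_gradient_le hz hy
  have h5 : ‖y‖ = ‖z‖ := by
    apply le_antisymm
    · by_contra! hlt
      nlinarith [hh.pos' hy]
    · by_contra! hlt
      nlinarith [hh.pos' hz]
  by_cases hr : ∃ c : ℝ, 0 < c ∧ z = c • y
  · obtain ⟨c, hc, rfl⟩ := hr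
    rw [norm_smul, Real.norm_of_nonneg hc.le] at h5
    have : c = 1 := by nlinarith
    simp [this]
  · push Not at hr
    have := hh.inner_gradient_lt hy hz hr
    rw [h5] at h1
    nlinarith

/-- The map `y ↦ ‖y‖ ∇h(y)` is onto `ℝⁿ ∖ {0}`: the
preimage is found by maximising `⟪x, z⟫ / h(x)` over the sphere. -/
lemma cone_surj (hh : IsSupportFn n h) {z : Euc n} (hz : z ≠ 0) :
    ∃ y : Euc n, y ≠ 0 ∧ ‖y‖ • gradient h y = z := by
  have hcont : ContinuousOn (fun x => ⟪x, z⟫ / h x) (USphere n) := by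
    refine ContinuousOn.div (by fun_prop) (hh.smooth.continuousOn.mono fun x hx => ?_)
      fun x hx => (hh.pos x hx).ne'
    exact ne_zero_of_mem hx
  have hnz : 0 < ‖z‖ := norm_pos_iff.2 hz
  have hzS : ‖z‖⁻¹ • z ∈ USphere n := by simp [norm_smul, hnz.ne']
  obtain ⟨x, hxS, hxmax⟩ := (isCompact_sphere (0 : Euc n) 1).exists_isMaxOn ⟨_, hzS⟩ hcont
  set N := ⟪x, z⟫ / h x with hN
  have hx0 := ne_zero_of_mem hxS
  have hNpos : 0 < N := by
    refine lt_of_lt_of_le ?_ (hxmax hzS)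
    simp only [real_inner_smul_left, real_inner_self_eq_norm_sq]
    have := hh.pos _ hzS
    positivity
  have hle : ∀ y : Euc n, y ≠ 0 → ⟪y, z⟫ - N * h y ≤ 0 := by
    intro y hy
    have hny : 0 < ‖y‖ := norm_pos_iff.2 hy
    have hyS : ‖y‖⁻¹ • y ∈ USphere n := by simp [norm_smul, hny.ne']
    have h1 : ⟪‖y‖⁻¹ • y, z⟫ / h (‖y‖⁻¹ • y) ≤ N := hxmax hyS
    rw [hh.homog _ (inv_pos.2 hny), real_inner_smul_left, mul_div_mul_left _ _ (inv_pos.2 hny).ne',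
      div_le_iff₀ (hh.pos' hy)] at h1
    linarith
  have hx_eq : ⟪x, z⟫ - N * h x = 0 := by
    rw [hN, div_mul_cancel₀ _ (hh.pos x hxS).ne', sub_self]
  have hmax : IsLocalMax (fun y => ⟪y, z⟫ - N * h y) x := by
    filter_upwards [isOpen_compl_singleton.mem_nhds hx0] with y hy
    rw [hx_eq]; exact hle y hy
  have hzN : z = N • gradient h x := by
    refine ext_inner_right ℝ fun v => ?_
    have hd : HasDerivAt (fun s : ℝ => ⟪x + s • v, z⟫ - N * h (x + s • v))
        (⟪v, z⟫ - N * ⟪gradient h x, v⟫) 0 := by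
      have h1 := SmoothOff.hasDerivAt_line hh.smooth x v (s := 0) (by simpa using hx0)
      have h2 : HasDerivAt (fun s : ℝ => ⟪x + s • v, z⟫) ⟪v, z⟫ 0 := by
        have h3 : HasDerivAt (fun s : ℝ => x + s • v) v 0 := by
          simpa using ((hasDerivAt_id (0:ℝ)).smul_const v).const_add x
        simpa using h3.inner ℝ (hasDerivAt_const (0:ℝ) z)
      simp only [zero_smul, add_zero] at h1
      exact h2.sub (h1.const_mul N)
    have hmax' : IsLocalMax (fun s : ℝ => ⟪x + s • v, z⟫ - N * h (x + s • v)) 0 := by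
      have hc : ContinuousAt (fun s : ℝ => x + s • v) 0 := by fun_prop
      refine IsLocalMax.comp_continuous (f := fun y => ⟪y, z⟫ - N * h y) ?_ hc
      simpa using hmax
    have := hmax'.hasDerivAt_eq_zero hd
    rw [real_inner_smul_left, real_inner_comm]; linarith
  refine ⟨N • x, smul_ne_zero hNpos.ne' hx0, ?_⟩
  rw [hh.gradient_smul hx0 hNpos, norm_smul, norm_of_mem hxS, Real.norm_of_nonneg hNpos.le, mul_one,
    ← hzN]

end IsSupportFn

/-! ### Polar coordinates and the cone measure formula -/

instance (n : ℕ) : IsFiniteMeasure (sphMeasure n) := by unfold sphMeasure; infer_instance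

/-- Polar integration of a 0-homogeneous function over a star-shaped domain `{ρ < 1}`. -/
lemma lintegral_cone {n : ℕ} (hn : 2 ≤ n) {A : Euc n → ENNReal} (hA : Measurable A)
    (hA0 : ∀ c : ℝ, 0 < c → ∀ x ≠ 0, A (c • x) = A x) {ρ : Euc n → ℝ} (hρ : Measurable ρ)
    (hρ0 : ∀ c : ℝ, 0 < c → ∀ x ≠ 0, ρ (c • x) = c * ρ x) (hρp : ∀ x ≠ 0, 0 < ρ x) :
    ∫⁻ z in {z | z ≠ 0 ∧ ρ z < 1}, A z =
      ∫⁻ x : USphere n, A x * ENNReal.ofReal ((ρ x)⁻¹ ^ n / n) ∂(sphMeasure n) := by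
  set D : Set (Euc n) := {z | ρ z < 1} with hD
  have hDm : MeasurableSet D := measurableSet_lt hρ measurable_const
  set G : Euc n → ENNReal := D.indicator A with hG
  have hGm : Measurable G := hA.indicator hDm
  have hfr : Module.finrank ℝ (Euc n) = n := by simp
  have e1 : ∫⁻ z in {z | z ≠ 0 ∧ ρ z < 1}, A z = ∫⁻ z in ({0}ᶜ : Set (Euc n)), G z := by
    rw [hG, setLIntegral_indicator hDm]
    congr 2
    ext z; simp [hD, and_comm]
  have e2 : ∫⁻ z in ({0}ᶜ : Set (Euc n)), G z =
      ∫⁻ z : ({0}ᶜ : Set (Euc n)), G z ∂((volume : Measure (Euc n)).comap (↑)) :=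
    (lintegral_subtype_comap (measurableSet_singleton _).compl G).symm
  have hmp := (volume : Measure (Euc n)).measurePreserving_homeomorphUnitSphereProd
  rw [hfr] at hmp
  have hFm : Measurable fun p : sphere (0 : Euc n) 1 × Ioi (0 : ℝ) => G (p.2.1 • p.1.1) := by
    refine hGm.comp ?_
    exact (measurable_subtype_coe.comp measurable_snd).smul
      (measurable_subtype_coe.comp measurable_fst)
  have e3 : ∫⁻ z : ({0}ᶜ : Set (Euc n)), G z ∂((volume : Measure (Euc n)).comap (↑)) =
      ∫⁻ p : sphere (0 : Euc n) 1 × Ioi (0 : ℝ), G (p.2.1 • p.1.1)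
        ∂((sphMeasure n).prod (Measure.volumeIoiPow (n - 1))) := by
    rw [sphMeasure, ← hmp.lintegral_comp hFm]
    refine lintegral_congr fun z => ?_
    congr 1
    have : ‖(z : Euc n)‖ ≠ 0 := norm_ne_zero_iff.2 z.2
    simp [smul_smul, mul_inv_cancel₀ this]
  rw [e1, e2, e3, lintegral_prod _ hFm.aemeasurable]
  refine lintegral_congr fun x => ?_
  have hx0 := ne_zero_of_mem x.2
  have hρx := hρp _ hx0
  have e4 : ∀ r : Ioi (0 : ℝ), G (r.1 • x.1) =
      (Iio (⟨(ρ x)⁻¹, inv_pos.2 hρx⟩ : Ioi (0:ℝ))).indicator (fun _ => A x) r := by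
    intro r
    have hr : 0 < r.1 := r.2
    have hiff : r.1 • x.1 ∈ D ↔ r ∈ Iio (⟨(ρ x)⁻¹, inv_pos.2 hρx⟩ : Ioi (0:ℝ)) := by
      rw [hD, mem_ofPred_eq, hρ0 _ hr _ hx0, mem_Iio, ← Subtype.coe_lt_coe, ← lt_div_iff₀ hρx, one_div]
    by_cases hm : r.1 • x.1 ∈ D
    · rw [hG, indicator_of_mem hm, indicator_of_mem (hiff.1 hm), hA0 _ hr _ hx0]
    · rw [hG, indicator_of_notMem hm, indicator_of_notMem (fun h => hm (hiff.2 h))]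
  simp only [e4]
  rw [lintegral_indicator_const measurableSet_Iio, Measure.volumeIoiPow_apply_Iio]
  congr 3
  · congr 1; omega
  · have : ((n - 1 : ℕ) : ℝ) = n - 1 := by rw [Nat.cast_sub (by omega)]; simp
    rw [this]; ring

namespace IsSupportFn

variable {n : ℕ} {h : Euc n → ℝ}

/-- Density of the cone measure of the body with respect to the spherical measure of normals. -/
def coneDens (n : ℕ) (h : Euc n → ℝ) (x : Euc n) : ℝ :=
  h x * sphDet n h x / ‖gradient h x‖ ^ n

lemma coneDens_pos (hh : IsSupportFn n h) {x : Euc n} (hx : x ∈ USphere n) :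
    0 < coneDens n h x := by
  have := hh.pos x hx
  have := hh.sphDet_pos hx
  have := norm_pos_iff.2 (hh.gradient_ne_zero (ne_zero_of_mem hx))
  unfold coneDens; positivity

lemma continuousOn_gradient (hh : IsSupportFn n h) : ContinuousOn (gradient h) {(0 : Euc n)}ᶜ :=
  fun _ hx => (SmoothOff.gradient_contDiffAt hh.smooth hx).continuousAt.continuousWithinAt

lemma continuousOn_hessOp (hh : IsSupportFn n h) : ContinuousOn (hessOp n h) {(0 : Euc n)}ᶜ :=
  fun _ hx => (((SmoothOff.gradient_contDiffAt hh.smooth hx).fderiv_right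
    (m := (⊤ : ℕ∞)) (by simp)).continuousAt).continuousWithinAt

lemma continuousOn_sphDet (hh : IsSupportFn n h) : ContinuousOn (sphDet n h) {(0 : Euc n)}ᶜ := by
  have h1 : ContinuousOn (aOp n h) {(0 : Euc n)}ᶜ := by
    refine hh.continuousOn_hessOp.add (Continuous.continuousOn ?_)
    exact (ContinuousLinearMap.smulRightL ℝ (Euc n) (Euc n)).continuous₂.comp
      ((innerSL ℝ).continuous.prodMk continuous_id)
  exact ContinuousLinearMap.continuous_det.comp_continuousOn h1

lemma continuousOn_coneDens (hh : IsSupportFn n h) :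
    ContinuousOn (coneDens n h) {(0 : Euc n)}ᶜ := by
  refine (hh.smooth.continuousOn.mul hh.continuousOn_sphDet).div
    (hh.continuousOn_gradient.norm.pow n) fun x hx => ?_
  exact pow_ne_zero _ (norm_ne_zero_iff.2 (hh.gradient_ne_zero hx))

lemma measurable_gradient (hh : IsSupportFn n h) : Measurable (gradient h) :=
  measurable_of_continuousOn_compl_singleton 0 hh.continuousOn_gradient

lemma measurable_det_coneDeriv (hh : IsSupportFn n h) :
    Measurable fun y => (coneDeriv n h y).det := by
  refine measurable_of_continuousOn_compl_singleton 0
    (ContinuousLinearMap.continuous_det.comp_continuousOn ?_)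
  refine (continuous_norm.continuousOn.smul hh.continuousOn_hessOp).add ?_
  have h1 : ContinuousOn (fun y : Euc n => ‖y‖⁻¹ • innerSL ℝ y) {(0 : Euc n)}ᶜ :=
    (continuous_norm.continuousOn.inv₀ fun x hx => norm_ne_zero_iff.2 hx).smul
      (innerSL ℝ).continuous.continuousOn
  exact (ContinuousLinearMap.smulRightL ℝ (Euc n) (Euc n)).continuous₂.comp_continuousOn
    (h1.prodMk hh.continuousOn_gradient)

lemma cone_image (hh : IsSupportFn n h) :
    (fun y => ‖y‖ • gradient h y) '' {z | z ≠ 0 ∧ ‖z‖ * ‖gradient h z‖ < 1} =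
      {z : Euc n | z ≠ 0 ∧ ‖z‖ < 1} := by
  ext z
  constructor
  · rintro ⟨y, ⟨hy0, hy1⟩, rfl⟩
    exact ⟨smul_ne_zero (norm_ne_zero_iff.2 hy0) (hh.gradient_ne_zero hy0), by
      simpa [norm_smul] using hy1⟩
  · rintro ⟨hz0, hz1⟩
    obtain ⟨y, hy0, rfl⟩ := hh.cone_surj hz0
    exact ⟨y, ⟨hy0, by simpa [norm_smul] using hz1⟩, rfl⟩

/-- The cone measure, pushed forward by the radial direction `∇h/|∇h|` of the boundary point with
normal `x`, is the spherical measure. -/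
lemma lintegral_coneDens (hn : 2 ≤ n) (hh : IsSupportFn n h) {a : Euc n → ENNReal}
    (ha : Measurable a) :
    ∫⁻ x : USphere n, a (‖gradient h x‖⁻¹ • gradient h x) * ENNReal.ofReal (coneDens n h x)
      ∂(sphMeasure n) = ∫⁻ x : USphere n, a x ∂(sphMeasure n) := by
  have hgm : Measurable (gradient h) :=
    measurable_of_continuousOn_compl_singleton 0 hh.continuousOn_gradient
  have hn0 : (n : ℝ) ≠ 0 := by positivity
  have hna : ∀ c : ℝ, 0 < c → ∀ x : Euc n, ‖c • x‖⁻¹ • (c • x) = ‖x‖⁻¹ • x := by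
    intro c hc x
    rw [norm_smul, Real.norm_of_nonneg hc.le, smul_smul]
    congr 1; field_simp
  set A : Euc n → ENNReal := fun z => a (‖z‖⁻¹ • z) with hA
  have hAm : Measurable A := ha.comp (measurable_norm.inv.smul measurable_id)
  have hA0 : ∀ c : ℝ, 0 < c → ∀ x ≠ 0, A (c • x) = A x := by
    intro c hc x _; simp only [hA]; rw [hna c hc]
  have h1 := lintegral_cone hn hAm hA0 (ρ := fun z => ‖z‖) measurable_norm
    (by intro c hc x _; rw [norm_smul, Real.norm_of_nonneg hc.le]) (fun x hx => norm_pos_iff.2 hx)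
  set B : Euc n → ENNReal :=
    fun y => ENNReal.ofReal |(coneDeriv n h y).det| * A (‖y‖ • gradient h y) with hB
  have hdm := hh.measurable_det_coneDeriv
  have hBm : Measurable B :=
    (ENNReal.measurable_ofReal.comp (hdm.abs)).mul (hAm.comp (measurable_norm.smul hgm))
  have hB0 : ∀ c : ℝ, 0 < c → ∀ x ≠ 0, B (c • x) = B x := by
    intro c hc x hx
    simp only [hB]
    rw [hh.coneDeriv_smul hx hc, hh.gradient_smul hx hc, norm_smul, mul_smul,
      hA0 _ (norm_pos_iff.2 hc.ne') _ (smul_ne_zero (norm_ne_zero_iff.2 hx)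
        (hh.gradient_ne_zero hx))]
  have h2 := lintegral_cone hn hBm hB0 (ρ := fun z => ‖z‖ * ‖gradient h z‖)
    (measurable_norm.mul hgm.norm)
    (by
      intro c hc x hx
      rw [norm_smul, Real.norm_of_nonneg hc.le, hh.gradient_smul hx hc, mul_assoc])
    (fun x hx => mul_pos (norm_pos_iff.2 hx) (norm_pos_iff.2 (hh.gradient_ne_zero hx)))
  let D : Set (Euc n) := {z | z ≠ 0 ∧ ‖z‖ * ‖gradient h z‖ < 1}
  have hDm : MeasurableSet D :=
    (measurableSet_singleton (0 : Euc n)).compl.inter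
      (measurableSet_lt (measurable_norm.mul hgm.norm) measurable_const)
  have him := hh.cone_image
  have h3 := lintegral_image_eq_lintegral_abs_det_fderiv_mul volume hDm
    (fun y hy => (hh.hasFDerivAt_cone hy.1).hasFDerivWithinAt)
    (hh.cone_injOn.mono fun y hy => hy.1) A
  rw [him, h1, h2] at h3
  have hc0 : ENNReal.ofReal (1 / n) ≠ 0 := by
    simp only [ne_eq, ENNReal.ofReal_eq_zero, not_le]; positivity
  have h4 : ∫⁻ x : USphere n, A x * ENNReal.ofReal ((‖(x : Euc n)‖)⁻¹ ^ n / n) ∂(sphMeasure n) =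
      (∫⁻ x : USphere n, a x ∂(sphMeasure n)) * ENNReal.ofReal (1 / n) := by
    rw [← lintegral_mul_const' _ _ ENNReal.ofReal_ne_top]
    refine lintegral_congr fun x => ?_
    simp [hA, norm_of_mem x.2]
  have h5 : ∫⁻ x : USphere n, B x * ENNReal.ofReal ((‖(x : Euc n)‖ * ‖gradient h x‖)⁻¹ ^ n / n)
      ∂(sphMeasure n) = (∫⁻ x : USphere n, a (‖gradient h x‖⁻¹ • gradient h x) *
        ENNReal.ofReal (coneDens n h x) ∂(sphMeasure n)) * ENNReal.ofReal (1 / n) := by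
    rw [← lintegral_mul_const' _ _ ENNReal.ofReal_ne_top]
    refine lintegral_congr fun x => ?_
    have hp := mul_pos (hh.pos x x.2) (hh.sphDet_pos x.2)
    simp only [hB, hA, norm_of_mem x.2, one_smul, one_mul, hh.det_coneDeriv x.2, abs_of_pos hp]
    rw [mul_right_comm, ← ENNReal.ofReal_mul hp.le, mul_assoc (a _), mul_comm (ENNReal.ofReal _),
      ← ENNReal.ofReal_mul (hh.coneDens_pos x.2).le]
    congr 2
    simp only [coneDens]; field_simp
    rw [one_div, inv_pow, div_eq_mul_inv]
  rw [h4, h5] at h3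
  exact ((ENNReal.mul_left_inj hc0 ENNReal.ofReal_ne_top).1 h3).symm

lemma integrable_sph_of_continuousOn {g : Euc n → ℝ} (hg : ContinuousOn g (USphere n)) :
    Integrable (fun x : USphere n => g x) (sphMeasure n) := by
  have : CompactSpace (USphere n) := isCompact_iff_compactSpace.1 (isCompact_sphere _ _)
  have hc : Continuous (fun x : USphere n => g x) := continuousOn_iff_continuous_domRestrict.1 hg
  exact hc.integrable_of_hasCompactSupport (HasCompactSupport.of_compactSpace _)

/-- Real-valued form of the cone measure formula. -/
lemma integral_coneDens (hn : 2 ≤ n) (hh : IsSupportFn n h) {a : Euc n → ℝ} (ha : Measurable a)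
    (hac : ContinuousOn a (USphere n)) :
    ∫ x : USphere n, a (‖gradient h x‖⁻¹ • gradient h x) * coneDens n h x
      ∂(sphMeasure n) = ∫ x : USphere n, a x ∂(sphMeasure n) := by
  have hgS : ∀ x ∈ USphere n, ‖gradient h x‖⁻¹ • gradient h x ∈ USphere n := fun x hx => by
    simp [norm_smul, hh.gradient_ne_zero (ne_zero_of_mem hx)]
  have hsub : USphere n ⊆ {(0 : Euc n)}ᶜ := fun x hx => ne_zero_of_mem hx
  have hgc : ContinuousOn (fun x => ‖gradient h x‖⁻¹ • gradient h x) (USphere n) :=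
    ((hh.continuousOn_gradient.mono hsub).norm.inv₀ fun x hx =>
      norm_ne_zero_iff.2 (hh.gradient_ne_zero (hsub hx))).smul (hh.continuousOn_gradient.mono hsub)
  have hI1 : Integrable (fun x : USphere n => a (‖gradient h x‖⁻¹ • gradient h x) *
      coneDens n h x) (sphMeasure n) :=
    integrable_sph_of_continuousOn (g := fun x => a (‖gradient h x‖⁻¹ • gradient h x) *
      coneDens n h x) ((hac.comp hgc hgS).mul (hh.continuousOn_coneDens.mono hsub))
  have hI2 := integrable_sph_of_continuousOn hac
  have hd : ∀ x : USphere n, 0 ≤ coneDens n h x := fun x => (hh.coneDens_pos x.2).le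
  rw [integral_eq_lintegral_pos_part_sub_lintegral_neg_part hI1,
    integral_eq_lintegral_pos_part_sub_lintegral_neg_part hI2,
    ← hh.lintegral_coneDens hn (a := fun x => ENNReal.ofReal (a x))
      (ENNReal.measurable_ofReal.comp ha),
    ← hh.lintegral_coneDens hn (a := fun x => ENNReal.ofReal (-a x))
      (ENNReal.measurable_ofReal.comp ha.neg)]
  congr 2
  · refine lintegral_congr fun x => ?_
    rw [← ENNReal.ofReal_mul' (hd x)]
  · refine lintegral_congr fun x => ?_
    rw [← ENNReal.ofReal_mul' (hd x), neg_mul]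

lemma integral_coneDens_one (hn : 2 ≤ n) (hh : IsSupportFn n h) :
    ∫ x : USphere n, coneDens n h x ∂(sphMeasure n) = sphArea n := by
  have := hh.integral_coneDens hn (a := fun _ => 1) measurable_const continuousOn_const
  simpa [sphArea, Measure.real] using this

end IsSupportFn

/-! ### Logarithmic potentials of hyperplanes on the sphere -/

instance (n : ℕ) : CompactSpace (USphere n) :=
  isCompact_iff_compactSpace.1 (isCompact_sphere _ _)

lemma sphere_nonempty {n : ℕ} (hn : 2 ≤ n) : ∃ x : Euc n, x ∈ USphere n :=
  ⟨EuclideanSpace.single ⟨0, by omega⟩ 1, by simp⟩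

lemma abs_inner_le_one {n : ℕ} {x u : Euc n} (hx : x ∈ USphere n) (hu : u ∈ USphere n) :
    |⟪x, u⟫| ≤ 1 := by
  have := abs_real_inner_le_norm x u
  rwa [norm_of_mem hx, norm_of_mem hu, one_mul] at this

/-- The logarithmic singularity of one coordinate, cut off to the unit cube, is integrable. -/
lemma integrable_log_cube {n : ℕ} (i₀ : Fin n) :
    Integrable (fun z : Fin n → ℝ => ∏ i, (Ioc (-1 : ℝ) 1).indicator
      (fun s => if i = i₀ then -Real.log |s| else 1) (z i)) volume := by
  refine Integrable.fintype_prod (f := fun i => (Ioc (-1 : ℝ) 1).indicator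
      (fun s => if i = i₀ then -Real.log |s| else 1)) fun i => ?_
  rw [integrable_indicator_iff measurableSet_Ioc]
  by_cases hi : i = i₀
  · simp only [hi, if_true, Real.log_abs]
    exact ((intervalIntegrable_iff_integrableOn_Ioc_of_le (by norm_num)).1
      (intervalIntegral.intervalIntegrable_log' (a := -1) (b := 1))).neg
  · simp only [hi, if_false]
    exact integrableOn_const (by simp)

/-- The integrals of `-log |⟪x, u⟫|` over the sphere are bounded uniformly in the direction `x`. -/
lemma exists_log_bound {n : ℕ} (hn : 2 ≤ n) :
    ∃ C : ℝ, 0 ≤ C ∧ ∀ x ∈ USphere n,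
      ∫⁻ u : USphere n, ENNReal.ofReal (-Real.log |⟪x, u⟫|) ∂(sphMeasure n) ≤ ENNReal.ofReal C := by
  have hn0 : (0 : ℝ) < n := by positivity
  set i₀ : Fin n := ⟨0, by omega⟩ with hi0
  set F : (Fin n → ℝ) → ℝ := fun z => ∏ i, (Ioc (-1 : ℝ) 1).indicator
      (fun s => if i = i₀ then -Real.log |s| else 1) (z i) with hF
  have hFi : Integrable F := integrable_log_cube i₀
  have hFm : Measurable F := by
    refine Finset.measurable_prod _ fun i _ => ?_
    refine Measurable.comp (g := (Ioc (-1 : ℝ) 1).indicator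
      (fun s => if i = i₀ then -Real.log |s| else 1)) ?_ (measurable_pi_apply (X := fun _ => ℝ) i)
    refine Measurable.indicator ?_ measurableSet_Ioc
    by_cases hi : i = i₀
    · simp only [hi, if_true, Real.log_abs]
      exact Real.measurable_log.neg
    · simpa only [hi, if_false] using measurable_const
  set I : ENNReal := ∫⁻ z, ENNReal.ofReal (F z) with hI
  have hIt : I ≠ ⊤ := hFi.lintegral_lt_top.ne
  have hc0 : ENNReal.ofReal (1 / n) ≠ 0 := by
    simp only [ne_eq, ENNReal.ofReal_eq_zero, not_le]; positivity
  refine ⟨I.toReal * n, by positivity, fun x hx => ?_⟩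
  set e : Euc n := EuclideanSpace.single i₀ 1 with he
  set T : Euc n ≃ₗᵢ[ℝ] Euc n := Submodule.reflection (ℝ ∙ (x - e))ᗮ with hT
  have hTx : T x = e := Submodule.reflection_sub (by rw [norm_of_mem hx]; simp [he])
  have hTi : ∀ z, (T z) i₀ = ⟪x, z⟫ := by
    intro z
    rw [← T.inner_map_map, hTx, he, EuclideanSpace.inner_single_left]; simp
  set A : Euc n → ENNReal := fun z => ENNReal.ofReal (-Real.log |⟪x, ‖z‖⁻¹ • z⟫|) with hA
  have hAm : Measurable A := by
    refine ENNReal.measurable_ofReal.comp (Real.measurable_log.comp (Measurable.abs ?_)).neg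
    exact (measurable_const (a := x)).inner (measurable_norm.inv.smul measurable_id)
  have hA0 : ∀ c : ℝ, 0 < c → ∀ z ≠ 0, A (c • z) = A z := by
    intro c hc z _
    simp only [hA]
    congr 5
    rw [norm_smul, Real.norm_of_nonneg hc.le, smul_smul]
    congr 1; field_simp
  have h1 := lintegral_cone hn hAm hA0 (ρ := fun z => ‖z‖) measurable_norm
    (by intro c hc x _; rw [norm_smul, Real.norm_of_nonneg hc.le]) (fun x hx => norm_pos_iff.2 hx)
  have h4 : ∫⁻ u : USphere n, A u * ENNReal.ofReal ((‖(u : Euc n)‖)⁻¹ ^ n / n) ∂(sphMeasure n) =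
      (∫⁻ u : USphere n, ENNReal.ofReal (-Real.log |⟪x, u⟫|) ∂(sphMeasure n)) *
        ENNReal.ofReal (1 / n) := by
    rw [← lintegral_mul_const' _ _ ENNReal.ofReal_ne_top]
    refine lintegral_congr fun u => ?_
    simp [hA, norm_of_mem u.2]
  have hmp : MeasurePreserving (fun z : Euc n => (WithLp.ofLp (T z) : Fin n → ℝ)) :=
    (PiLp.volume_preserving_ofLp (Fin n)).comp T.measurePreserving
  have h2 : ∫⁻ z in {z : Euc n | z ≠ 0 ∧ ‖z‖ < 1}, A z ≤ I := by
    calc ∫⁻ z in {z : Euc n | z ≠ 0 ∧ ‖z‖ < 1}, A z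
        ≤ ∫⁻ z in {z : Euc n | z ≠ 0 ∧ ‖z‖ < 1}, ENNReal.ofReal (F (WithLp.ofLp (T z))) := by
          refine setLIntegral_mono' ((measurableSet_singleton (0 : Euc n)).compl.inter
            (measurableSet_lt measurable_norm measurable_const)) fun z hz => ?_
          refine ENNReal.ofReal_le_ofReal ?_
          have hzp : 0 < ‖z‖ := norm_pos_iff.2 hz.1
          have hlt : ∀ i, |T z i| < 1 := fun i => by
            have := PiLp.norm_apply_le (T z) i
            rw [T.norm_map] at this
            exact this.trans_lt hz.2
          have hFv : F (WithLp.ofLp (T z)) = -Real.log |⟪x, z⟫| := by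
            simp only [hF]
            rw [Finset.prod_congr rfl (g := fun i => if i = i₀ then -Real.log |⟪x, z⟫| else 1)]
            · simp
            · intro i _
              have hm : T z i ∈ Ioc (-1 : ℝ) 1 :=
                ⟨(abs_lt.1 (hlt i)).1, (abs_lt.1 (hlt i)).2.le⟩
              rw [indicator_of_mem hm]
              by_cases hi : i = i₀
              · simp only [hi, if_true, hTi]
              · simp [hi]
          rw [hFv, inner_smul_right, abs_mul, abs_inv, abs_norm]
          by_cases h0 : ⟪x, z⟫ = 0
          · simp [h0]
          · rw [Real.log_mul (inv_ne_zero hzp.ne') (abs_ne_zero.2 h0), Real.log_inv]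
            have := Real.log_nonpos hzp.le hz.2.le
            linarith
      _ ≤ ∫⁻ z : Euc n, ENNReal.ofReal (F (WithLp.ofLp (T z))) := setLIntegral_le_lintegral _ _
      _ = I := hmp.lintegral_comp (ENNReal.measurable_ofReal.comp hFm)
  rw [h1, h4] at h2
  rw [ENNReal.ofReal_mul ENNReal.toReal_nonneg, ENNReal.ofReal_toReal hIt]
  calc _ = (∫⁻ u : USphere n, ENNReal.ofReal (-Real.log |⟪x, u⟫|) ∂(sphMeasure n)) *
        ENNReal.ofReal (1 / n) * ENNReal.ofReal n := by
          rw [mul_assoc, ← ENNReal.ofReal_mul (by positivity), one_div_mul_cancel hn0.ne']; simp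
    _ ≤ _ := by gcongr

/-- Great subspheres are null sets. -/
lemma ae_inner_ne_zero {n : ℕ} (hn : 2 ≤ n) {x : Euc n} (hx : x ∈ USphere n) :
    ∀ᵐ u : USphere n ∂(sphMeasure n), ⟪x, (u : Euc n)⟫ ≠ 0 := by
  set s : Set (Euc n) := {z | ⟪x, z⟫ = 0} with hs
  have hsm : MeasurableSet s :=
    measurableSet_eq_fun ((measurable_const (a := x)).inner measurable_id) measurable_const
  have hs0 : volume s = 0 := by
    have h1 : s = ((ℝ ∙ x)ᗮ : Submodule ℝ (Euc n)) := by
      ext z; simp [hs, Submodule.mem_orthogonal_singleton_iff_inner_right]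
    rw [h1]
    refine Measure.addHaar_submodule _ _ fun htop => ?_
    have h2 : x ∈ (ℝ ∙ x)ᗮ := by rw [htop]; trivial
    rw [Submodule.mem_orthogonal_singleton_iff_inner_right] at h2
    exact ne_zero_of_mem hx (inner_self_eq_zero.1 h2)
  have h1 := lintegral_cone hn (A := s.indicator fun _ => 1) (measurable_const.indicator hsm)
    (by
      intro c hc z _
      have : c • z ∈ s ↔ z ∈ s := by simp [hs, inner_smul_right, hc.ne']
      by_cases hz : z ∈ s
      · rw [indicator_of_mem hz, indicator_of_mem (this.2 hz)]
      · rw [indicator_of_notMem hz, indicator_of_notMem (fun h => hz (this.1 h))])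
    (ρ := fun z => ‖z‖) measurable_norm
    (by intro c hc x _; rw [norm_smul, Real.norm_of_nonneg hc.le]) (fun x hx => norm_pos_iff.2 hx)
  have h2 : ∫⁻ z in {z : Euc n | z ≠ 0 ∧ ‖z‖ < 1}, s.indicator (fun _ => (1 : ENNReal)) z = 0 := by
    refine le_antisymm ((setLIntegral_le_lintegral _ _).trans ?_) bot_le
    rw [lintegral_indicator hsm]; simp [hs0]
  rw [h2] at h1
  have hm : Measurable fun u : USphere n => s.indicator (fun _ => (1 : ENNReal)) (u : Euc n) :=
    (measurable_const.indicator hsm).comp measurable_subtype_coe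
  have h3 := (lintegral_eq_zero_iff (hm.mul ((ENNReal.measurable_ofReal.comp
    (((measurable_norm.comp measurable_subtype_coe).inv.pow_const n).div_const _))))).1 h1.symm
  filter_upwards [h3] with u hu h0
  have hu' : (u : Euc n) ∈ s := h0
  have hn0 : (0 : ℝ) < n := by positivity
  change s.indicator (fun _ => (1 : ENNReal)) (u : Euc n) *
    ENNReal.ofReal (‖(u : Euc n)‖⁻¹ ^ n / n) = 0 at hu
  rw [indicator_of_mem hu', norm_of_mem u.2, one_mul, ENNReal.ofReal_eq_zero] at hu
  have : (0 : ℝ) < (1 : ℝ)⁻¹ ^ n / n := by simp; omega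
  linarith

/-! ### The gauge and the entropy of a body -/

/-- The gauge (Minkowski functional) of the body with support function `h`, written through `h`. -/
def gaugeFn (n : ℕ) (h : Euc n → ℝ) (z : Euc n) : ℝ :=
  sSup ((fun x : USphere n => ⟪(x : Euc n), z⟫ / h x) '' univ)

/-- The entropy `∫ log (radial function)` of the body with support function `h`. -/
def entropy (n : ℕ) (h : Euc n → ℝ) : ℝ :=
  ∫ u : USphere n, -Real.log (gaugeFn n h u) ∂(sphMeasure n)

namespace IsSupportFn

variable {n : ℕ} {h : Euc n → ℝ}

lemma continuous_restrict (hh : IsSupportFn n h) : Continuous (fun x : USphere n => h x) :=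
  hh.smooth.continuousOn.comp_continuous continuous_subtype_val fun x => ne_zero_of_mem x.2

lemma continuous_gauge (hh : IsSupportFn n h) : Continuous (gaugeFn n h) := by
  refine IsCompact.continuous_sSup (f := fun (z : Euc n) (x : USphere n) =>
    ⟪(x : Euc n), z⟫ / h x) isCompact_univ ?_
  refine Continuous.div ?_ (hh.continuous_restrict.comp continuous_snd) fun p =>
    (hh.pos _ p.2.2).ne'
  exact (continuous_subtype_val.comp continuous_snd).inner continuous_fst

lemma le_gauge (hh : IsSupportFn n h) {x : Euc n} (hx : x ∈ USphere n) (z : Euc n) :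
    ⟪x, z⟫ / h x ≤ gaugeFn n h z := by
  refine le_csSup (IsCompact.bddAbove (isCompact_univ.image ?_)) ⟨⟨x, hx⟩, mem_univ _, rfl⟩
  refine Continuous.div ?_ hh.continuous_restrict fun p => (hh.pos _ p.2).ne'
  exact continuous_subtype_val.inner continuous_const

lemma gauge_pos (hh : IsSupportFn n h) {z : Euc n} (hz : z ≠ 0) : 0 < gaugeFn n h z := by
  have hz' := norm_pos_iff.2 hz
  have hx : ‖z‖⁻¹ • z ∈ USphere n := by simp [norm_smul, hz]
  refine lt_of_lt_of_le (div_pos ?_ (hh.pos _ hx)) (hh.le_gauge hx z)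
  rw [inner_smul_left, real_inner_self_eq_norm_sq]; simp; positivity

lemma gauge_grad (hh : IsSupportFn n h) {x : Euc n} (hx : x ∈ USphere n) :
    gaugeFn n h (‖gradient h x‖⁻¹ • gradient h x) = ‖gradient h x‖⁻¹ := by
  have hx0 := ne_zero_of_mem hx
  have hg : 0 < ‖gradient h x‖ := norm_pos_iff.2 (hh.gradient_ne_zero hx0)
  refine le_antisymm (csSup_le ⟨_, ⟨x, hx⟩, mem_univ _, rfl⟩ ?_) ?_
  · rintro _ ⟨y, -, rfl⟩
    have := hh.inner_gradient_le hx0 (ne_zero_of_mem y.2)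
    have hy := hh.pos _ y.2
    simp only [inner_smul_right]
    rw [mul_div_assoc, real_inner_comm]
    exact mul_le_of_le_one_right (by positivity) ((div_le_one hy).2 this)
  · refine le_trans (le_of_eq ?_) (hh.le_gauge hx _)
    rw [inner_smul_right, real_inner_comm, hh.euler hx0, mul_div_assoc,
      div_self (hh.pos _ hx).ne', mul_one]

lemma abs_le_gauge (hh : IsSupportFn n h) (he : ∀ x, h (-x) = h x) {x : Euc n}
    (hx : x ∈ USphere n) (z : Euc n) : |⟪x, z⟫| / h x ≤ gaugeFn n h z := by
  rcases abs_cases ⟪x, z⟫ with ⟨h1, -⟩ | ⟨h1, -⟩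
  · rw [h1]; exact hh.le_gauge hx z
  · rw [h1, ← inner_neg_left, ← he x]
    exact hh.le_gauge (by simpa using hx) z

lemma continuousOn_log_gauge (hh : IsSupportFn n h) :
    ContinuousOn (fun z => Real.log (gaugeFn n h z)) (USphere n) :=
  hh.continuous_gauge.continuousOn.log fun _ hx => (hh.gauge_pos (ne_zero_of_mem hx)).ne'

/-- The entropy is controlled to first order by the cone measure. At the direction `z` of the
boundary point with normal `x`, the gauge of `h₁` is `⟪x, z⟫ / h₁ x` while that of `h₂` is at least
`⟪x, z⟫ / h₂ x`; then `log r ≤ r - 1` is integrated over all directions. -/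
lemma entropy_sub_le (hn : 2 ≤ n) {h₁ h₂ : Euc n → ℝ} (hh₁ : IsSupportFn n h₁)
    (hh₂ : IsSupportFn n h₂) :
    entropy n h₂ - entropy n h₁ ≤
      ∫ x : USphere n, (h₂ x - h₁ x) / h₁ x * coneDens n h₁ x ∂(sphMeasure n) := by
  have hsub : USphere n ⊆ {(0 : Euc n)}ᶜ := fun x hx => ne_zero_of_mem hx
  have hI1 := integrable_sph_of_continuousOn (hh₁.continuousOn_log_gauge)
  have hI2 := integrable_sph_of_continuousOn (hh₂.continuousOn_log_gauge)
  set a : Euc n → ℝ := fun z => Real.log (gaugeFn n h₁ z) - Real.log (gaugeFn n h₂ z) with ha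
  have hac : ContinuousOn a (USphere n) :=
    hh₁.continuousOn_log_gauge.sub hh₂.continuousOn_log_gauge
  have ham : Measurable a :=
    (Real.measurable_log.comp hh₁.continuous_gauge.measurable).sub
      (Real.measurable_log.comp hh₂.continuous_gauge.measurable)
  have h1 : entropy n h₂ - entropy n h₁ = ∫ x : USphere n, a x ∂(sphMeasure n) := by
    simp only [entropy, ha]
    rw [integral_sub hI1 hI2, integral_neg, integral_neg]; ring
  have hgS : ∀ x ∈ USphere n, ‖gradient h₁ x‖⁻¹ • gradient h₁ x ∈ USphere n := fun x hx => by
    simp [norm_smul, hh₁.gradient_ne_zero (ne_zero_of_mem hx)]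
  have hgc : ContinuousOn (fun x => ‖gradient h₁ x‖⁻¹ • gradient h₁ x) (USphere n) :=
    ((hh₁.continuousOn_gradient.mono hsub).norm.inv₀ fun x hx =>
      norm_ne_zero_iff.2 (hh₁.gradient_ne_zero (hsub hx))).smul (hh₁.continuousOn_gradient.mono hsub)
  rw [h1, ← hh₁.integral_coneDens hn ham hac]
  refine integral_mono (integrable_sph_of_continuousOn (g := fun x =>
      a (‖gradient h₁ x‖⁻¹ • gradient h₁ x) * coneDens n h₁ x) ((hac.comp hgc hgS).mul
      (hh₁.continuousOn_coneDens.mono hsub)))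
    (integrable_sph_of_continuousOn (g := fun x => (h₂ x - h₁ x) / h₁ x * coneDens n h₁ x)
      ((((hh₂.smooth.continuousOn.mono hsub).sub (hh₁.smooth.continuousOn.mono hsub)).div
        (hh₁.smooth.continuousOn.mono hsub) fun x hx => (hh₁.pos x hx).ne').mul
      (hh₁.continuousOn_coneDens.mono hsub))) fun x => ?_
  have hx := x.2
  have hx0 := ne_zero_of_mem hx
  refine mul_le_mul_of_nonneg_right ?_ (hh₁.coneDens_pos hx).le
  have hg : 0 < ‖gradient h₁ x‖ := norm_pos_iff.2 (hh₁.gradient_ne_zero hx0)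
  have p1 := hh₁.pos _ hx
  have p2 := hh₂.pos _ hx
  have hle := hh₂.le_gauge hx (‖gradient h₁ x‖⁻¹ • gradient h₁ (x : Euc n))
  rw [inner_smul_right, real_inner_comm, hh₁.euler hx0] at hle
  simp only [ha]
  rw [hh₁.gauge_grad hx]
  have h3 := Real.log_le_log (by positivity) hle
  have h4 : Real.log (‖gradient h₁ (x : Euc n)‖⁻¹ * h₁ x / h₂ x) =
      Real.log ‖gradient h₁ (x : Euc n)‖⁻¹ - Real.log (h₂ x / h₁ x) := by
    rw [← Real.log_div (by positivity) (by positivity)]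
    congr 1; field_simp
  have h5 := Real.log_le_sub_one_of_pos (div_pos p2 p1)
  have h6 : (h₂ x - h₁ x) / h₁ x = h₂ x / h₁ x - 1 := by field_simp
  rw [h6]; linarith

/-- The width in each direction controls the entropy from above: a symmetric body lies in the slab
`|⟪x, ·⟫| ≤ h(x)`, whose radial function is `h(x) / |⟪x, u⟫|`. -/
lemma entropy_le {C : ℝ} (hC0 : 0 ≤ C) (hC : ∀ x ∈ USphere n,
      ∫⁻ u : USphere n, ENNReal.ofReal (-Real.log |⟪x, u⟫|) ∂(sphMeasure n) ≤ ENNReal.ofReal C)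
    (hn : 2 ≤ n) (hh : IsSupportFn n h)
    (he : ∀ x, h (-x) = h x) {x : Euc n} (hx : x ∈ USphere n) :
    entropy n h ≤ sphArea n * Real.log (h x) + C := by
  have hae := ae_inner_ne_zero hn hx
  have hm : Measurable fun u : USphere n => -Real.log |⟪x, (u : Euc n)⟫| :=
    (Real.measurable_log.comp ((measurable_const (a := x)).inner measurable_subtype_coe).abs).neg
  have hnn : ∀ u : USphere n, 0 ≤ -Real.log |⟪x, (u : Euc n)⟫| := fun u => by
    have := Real.log_nonpos (abs_nonneg _) (abs_inner_le_one hx u.2)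
    linarith
  have hI : Integrable (fun u : USphere n => -Real.log |⟪x, (u : Euc n)⟫|) (sphMeasure n) := by
    refine ⟨hm.aestronglyMeasurable, ?_⟩
    rw [hasFiniteIntegral_iff_ofReal (ae_of_all _ hnn)]
    exact (hC x hx).trans_lt ENNReal.ofReal_lt_top
  have hIC : ∫ u : USphere n, -Real.log |⟪x, (u : Euc n)⟫| ∂(sphMeasure n) ≤ C := by
    rw [integral_eq_lintegral_of_nonneg_ae (ae_of_all _ hnn) hm.aestronglyMeasurable]
    exact ENNReal.toReal_le_of_le_ofReal hC0 (hC x hx)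
  calc entropy n h ≤ ∫ u : USphere n, (Real.log (h x) + -Real.log |⟪x, (u : Euc n)⟫|)
        ∂(sphMeasure n) := by
        refine integral_mono_ae (integrable_sph_of_continuousOn (hh.continuousOn_log_gauge.neg))
          ((integrable_const _).add hI) ?_
        filter_upwards [hae] with u hu
        have h1 := Real.log_le_log (div_pos (abs_pos.2 hu) (hh.pos x hx)) (hh.abs_le_gauge he hx u)
        rw [Real.log_div (abs_ne_zero.2 hu) (hh.pos x hx).ne'] at h1
        linarith
    _ ≤ _ := by
        rw [integral_add (integrable_const _) hI, integral_const]
        simp only [smul_eq_mul, Measure.real, sphArea]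
        linarith

end IsSupportFn

/-! ### Joint space-time regularity -/

section Regularity

variable {E V : Type*} [NormedAddCommGroup E] [NormedSpace ℝ E]
  [NormedAddCommGroup V] [NormedSpace ℝ V]

lemma slice_hasFDerivAt {J : Set ℝ} {W : Set E} (hW : IsOpen W)
    {G : ℝ → E → V}
    (hG : ContDiffOn ℝ (⊤ : ℕ∞) (fun p : ℝ × E => G p.1 p.2) (J ×ˢ W)) {t : ℝ} (ht : t ∈ J)
    {x : E} (hx : x ∈ W) : HasFDerivAt (G t)
      ((fderivWithin ℝ (fun p : ℝ × E => G p.1 p.2) (J ×ˢ W) (t, x)).comp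
        (ContinuousLinearMap.inr ℝ ℝ E)) x := by
  have h1 : HasFDerivWithinAt (fun p : ℝ × E => G p.1 p.2)
      (fderivWithin ℝ (fun p : ℝ × E => G p.1 p.2) (J ×ˢ W) (t, x)) (J ×ˢ W) (t, x) :=
    ((hG.differentiableOn (by simp)) (t, x) ⟨ht, hx⟩).hasFDerivWithinAt
  have h2 : HasFDerivWithinAt (fun y : E => (t, y)) (ContinuousLinearMap.inr ℝ ℝ E) W x :=
    (hasFDerivAt_prodMk_right t x).hasFDerivWithinAt
  exact (h1.comp x h2 fun y hy => ⟨ht, hy⟩).hasFDerivAt (hW.mem_nhds hx)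

/-- The spatial derivative of a jointly smooth function is jointly smooth. -/
lemma slice_fderiv_contDiffOn {J : Set ℝ} (hJ : UniqueDiffOn ℝ J) {W : Set E} (hW : IsOpen W)
    {G : ℝ → E → V}
    (hG : ContDiffOn ℝ (⊤ : ℕ∞) (fun p : ℝ × E => G p.1 p.2) (J ×ˢ W)) :
    ContDiffOn ℝ (⊤ : ℕ∞) (fun p : ℝ × E => fderiv ℝ (G p.1) p.2) (J ×ˢ W) := by
  have h1 : ContDiffOn ℝ (⊤ : ℕ∞) (fun p : ℝ × E =>
      (fderivWithin ℝ (fun p : ℝ × E => G p.1 p.2) (J ×ˢ W) p).comp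
        (ContinuousLinearMap.inr ℝ ℝ E)) (J ×ˢ W) :=
    (hG.fderivWithin (hJ.prod hW.uniqueDiffOn) (m := (⊤ : ℕ∞)) (by simp)).clm_comp contDiffOn_const
  exact h1.congr fun p hp => (slice_hasFDerivAt hW hG hp.1 hp.2).fderiv

/-- Time derivative of a family of functions. -/
def dt (G : ℝ → E → V) (t : ℝ) (x : E) : V := deriv (fun s => G s x) t

variable {W : Set E} {G : ℝ → E → V}

lemma hasDerivAt_time (hW : IsOpen W)
    (hG : ContDiffOn ℝ (⊤ : ℕ∞) (fun p : ℝ × E => G p.1 p.2) (Ioi 0 ×ˢ W)) {t : ℝ} (ht : 0 < t)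
    {x : E} (hx : x ∈ W) :
    HasDerivAt (fun s => G s x) (fderiv ℝ (fun p : ℝ × E => G p.1 p.2) (t, x) (1, 0)) t := by
  have h1 : HasFDerivAt (fun p : ℝ × E => G p.1 p.2)
      (fderiv ℝ (fun p : ℝ × E => G p.1 p.2) (t, x)) (t, x) :=
    ((hG.differentiableOn (by simp)).differentiableAt
      ((isOpen_Ioi.prod hW).mem_nhds (mk_mem_prod (mem_Ioi.2 ht) hx))).hasFDerivAt
  have h2 : HasDerivAt (fun s : ℝ => (s, x)) ((1 : ℝ), (0 : E)) t :=
    (hasDerivAt_id t).prodMk (hasDerivAt_const t x)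
  exact h1.comp_hasDerivAt t h2

lemma dt_eq (hW : IsOpen W)
    (hG : ContDiffOn ℝ (⊤ : ℕ∞) (fun p : ℝ × E => G p.1 p.2) (Ioi 0 ×ˢ W)) {t : ℝ} (ht : 0 < t)
    {x : E} (hx : x ∈ W) :
    dt G t x = fderiv ℝ (fun p : ℝ × E => G p.1 p.2) (t, x) (1, 0) :=
  (hasDerivAt_time hW hG ht hx).deriv

lemma hasDerivAt_dt (hW : IsOpen W)
    (hG : ContDiffOn ℝ (⊤ : ℕ∞) (fun p : ℝ × E => G p.1 p.2) (Ioi 0 ×ˢ W)) {t : ℝ} (ht : 0 < t)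
    {x : E} (hx : x ∈ W) : HasDerivAt (fun s => G s x) (dt G t x) t := by
  rw [dt_eq hW hG ht hx]; exact hasDerivAt_time hW hG ht hx

lemma dt_contDiffOn (hW : IsOpen W)
    (hG : ContDiffOn ℝ (⊤ : ℕ∞) (fun p : ℝ × E => G p.1 p.2) (Ioi 0 ×ˢ W)) :
    ContDiffOn ℝ (⊤ : ℕ∞) (fun p : ℝ × E => dt G p.1 p.2) (Ioi 0 ×ˢ W) := by
  have h1 : ContDiffOn ℝ (⊤ : ℕ∞) (fun p : ℝ × E =>
      fderiv ℝ (fun p : ℝ × E => G p.1 p.2) p (1, 0)) (Ioi 0 ×ˢ W) :=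
    (hG.fderiv_of_isOpen (isOpen_Ioi.prod hW) (m := (⊤ : ℕ∞)) (by simp)).clm_apply contDiffOn_const
  exact h1.congr fun p hp => dt_eq hW hG hp.1 hp.2

/-- Time and space derivatives commute. -/
lemma hasDerivAt_fderiv (hW : IsOpen W)
    (hG : ContDiffOn ℝ (⊤ : ℕ∞) (fun p : ℝ × E => G p.1 p.2) (Ioi 0 ×ˢ W)) {t : ℝ} (ht : 0 < t)
    {x : E} (hx : x ∈ W) :
    HasDerivAt (fun s => fderiv ℝ (G s) x) (fderiv ℝ (dt G t) x) t := by
  set F : ℝ × E → V := fun p => G p.1 p.2 with hF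
  have hU : IsOpen (Ioi (0 : ℝ) ×ˢ W) := isOpen_Ioi.prod hW
  have hFd : ContDiffOn ℝ (⊤ : ℕ∞) (fderiv ℝ F) (Ioi 0 ×ˢ W) :=
    hG.fderiv_of_isOpen hU (m := (⊤ : ℕ∞)) (by simp)
  have hF2 : HasFDerivAt (fderiv ℝ F) (fderiv ℝ (fderiv ℝ F) (t, x)) (t, x) :=
    ((hFd.differentiableOn (by simp)).differentiableAt (hU.mem_nhds (mk_mem_prod (mem_Ioi.2 ht) hx))).hasFDerivAt
  have e1 : ∀ s > 0, ∀ y ∈ W, fderiv ℝ (G s) y =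
      (fderiv ℝ F (s, y)).comp (ContinuousLinearMap.inr ℝ ℝ E) := by
    intro s hs y hy
    have := (slice_hasFDerivAt hW hG hs hy).fderiv
    rw [this, fderivWithin_of_isOpen hU (mk_mem_prod (mem_Ioi.2 hs) hy)]
  have h2 : HasDerivAt (fun s : ℝ => (s, x)) ((1 : ℝ), (0 : E)) t :=
    (hasDerivAt_id t).prodMk (hasDerivAt_const t x)
  have h3 : HasDerivAt (fun s => (fderiv ℝ F (s, x)).comp (ContinuousLinearMap.inr ℝ ℝ E))
      ((fderiv ℝ (fderiv ℝ F) (t, x) (1, 0)).comp (ContinuousLinearMap.inr ℝ ℝ E)) t := by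
    have h4 := hF2.comp_hasDerivAt t h2
    exact (((ContinuousLinearMap.compL ℝ E (ℝ × E) V).flip
      (ContinuousLinearMap.inr ℝ ℝ E)).hasFDerivAt).comp_hasDerivAt t h4
  have h5 : HasFDerivAt (fun y => fderiv ℝ F (t, y) (1, 0))
      ((ContinuousLinearMap.apply ℝ V ((1 : ℝ), (0 : E))).comp
        ((fderiv ℝ (fderiv ℝ F) (t, x)).comp (ContinuousLinearMap.inr ℝ ℝ E))) x := by
    have h6 := hF2.comp x (hasFDerivAt_prodMk_right t x)
    exact (ContinuousLinearMap.apply ℝ V ((1 : ℝ), (0 : E))).hasFDerivAt.comp x h6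
  have h7 : fderiv ℝ (dt G t) x = (ContinuousLinearMap.apply ℝ V ((1 : ℝ), (0 : E))).comp
        ((fderiv ℝ (fderiv ℝ F) (t, x)).comp (ContinuousLinearMap.inr ℝ ℝ E)) := by
    rw [← h5.fderiv]
    refine Filter.EventuallyEq.fderiv_eq ?_
    filter_upwards [hW.mem_nhds hx] with y hy using dt_eq hW hG ht hy
  have hsymm : IsSymmSndFDerivAt ℝ F (t, x) :=
    (hG.contDiffAt (hU.mem_nhds (mk_mem_prod (mem_Ioi.2 ht) hx))).isSymmSndFDerivAt (by
      simp only [minSmoothness_of_isRCLikeNormedField]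
      exact WithTop.coe_le_coe.2 (le_top : (2:ℕ∞) ≤ ⊤))
  rw [h7]
  have h8 : (ContinuousLinearMap.apply ℝ V ((1 : ℝ), (0 : E))).comp
        ((fderiv ℝ (fderiv ℝ F) (t, x)).comp (ContinuousLinearMap.inr ℝ ℝ E)) =
      (fderiv ℝ (fderiv ℝ F) (t, x) (1, 0)).comp (ContinuousLinearMap.inr ℝ ℝ E) := by
    ext v
    simpa using hsymm.eq (0, v) (1, 0)
  rw [h8]
  refine h3.congr_of_eventuallyEq ?_
  filter_upwards [isOpen_Ioi.mem_nhds ht] with s hs using e1 s hs x hx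

end Regularity

/-! ### Differentiation of spherical integrals -/

lemma isCompact_slab {n : ℕ} (a b : ℝ) : IsCompact (Icc a b ×ˢ USphere n) :=
  isCompact_Icc.prod (isCompact_sphere _ _)

lemma exists_bound_slab {n : ℕ} {a b : ℝ} {G : ℝ → Euc n → ℝ}
    (hG : ContinuousOn (fun p : ℝ × Euc n => G p.1 p.2) (Icc a b ×ˢ USphere n)) :
    ∃ C : ℝ, 0 < C ∧ ∀ t ∈ Icc a b, ∀ x ∈ USphere n, |G t x| ≤ C := by
  obtain ⟨C, hC⟩ := (isCompact_slab a b).exists_bound_of_continuousOn hG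
  exact ⟨max C 1, by positivity, fun t ht x hx => (hC (t, x) ⟨ht, hx⟩).trans (le_max_left _ _)⟩

lemma continuousOn_slice {n : ℕ} {J : Set ℝ} {W : Set (Euc n)} {G : ℝ → Euc n → ℝ}
    (hG : ContinuousOn (fun p : ℝ × Euc n => G p.1 p.2) (J ×ˢ W)) {t : ℝ} (ht : t ∈ J) :
    ContinuousOn (G t) W :=
  hG.comp (continuousOn_const.prodMk continuousOn_id) fun _ hx => ⟨ht, hx⟩

lemma hasDerivAt_sphInt {n : ℕ} {G G' : ℝ → Euc n → ℝ}
    (hd : ∀ t > 0, ∀ x ∈ USphere n, HasDerivAt (fun s => G s x) (G' t x) t)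
    (hc : ContinuousOn (fun p : ℝ × Euc n => G p.1 p.2) (Ioi 0 ×ˢ USphere n))
    (hc' : ContinuousOn (fun p : ℝ × Euc n => G' p.1 p.2) (Ioi 0 ×ˢ USphere n))
    {t : ℝ} (ht : 0 < t) :
    HasDerivAt (fun s => ∫ x : USphere n, G s x ∂(sphMeasure n))
      (∫ x : USphere n, G' t x ∂(sphMeasure n)) t := by
  have hsub : Icc (t / 2) (2 * t) ⊆ Ioi 0 := fun s hs => lt_of_lt_of_le (half_pos ht) hs.1
  obtain ⟨C, hC0, hC⟩ := exists_bound_slab (hc'.mono (prod_mono hsub subset_rfl))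
  have hnh : Icc (t / 2) (2 * t) ∈ 𝓝 t := Icc_mem_nhds (by linarith) (by linarith)
  have hI : ∀ s > 0, Integrable (fun x : USphere n => G s x) (sphMeasure n) := fun s hs =>
    IsSupportFn.integrable_sph_of_continuousOn (continuousOn_slice hc hs)
  refine (hasDerivAt_integral_of_dominated_loc_of_deriv_le (μ := sphMeasure n)
    (F := fun s (x : USphere n) => G s x) (F' := fun s (x : USphere n) => G' s x)
    (bound := fun _ => C) hnh ?_ (hI t ht) ?_ ?_ (integrable_const _) ?_).2
  · filter_upwards [isOpen_Ioi.mem_nhds ht] with s hs using (hI s hs).aestronglyMeasurable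
  · exact (IsSupportFn.integrable_sph_of_continuousOn
      (continuousOn_slice hc' ht)).aestronglyMeasurable
  · exact ae_of_all _ fun x s hs => hC s hs x x.2
  · exact ae_of_all _ fun x s hs => hd s (hsub hs) x x.2

/-! ### Basic consequences of the flow equation -/

lemma isOpen_punct (n : ℕ) : IsOpen ({(0 : Euc n)}ᶜ) := isOpen_compl_singleton

lemma sphere_sub (n : ℕ) : USphere n ⊆ {(0 : Euc n)}ᶜ := fun _ hx => ne_zero_of_mem hx

lemma slab_sub (n : ℕ) : Ioi (0 : ℝ) ×ˢ USphere n ⊆ Ioi (0 : ℝ) ×ˢ {(0 : Euc n)}ᶜ :=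
  prod_mono subset_rfl (sphere_sub n)

lemma gradient_contDiffOn {n : ℕ} {J : Set ℝ} (hJ : UniqueDiffOn ℝ J) {H : ℝ → Euc n → ℝ}
    (hs : ContDiffOn ℝ (⊤ : ℕ∞) (fun p : ℝ × Euc n => H p.1 p.2) (J ×ˢ {(0 : Euc n)}ᶜ)) :
    ContDiffOn ℝ (⊤ : ℕ∞) (fun p : ℝ × Euc n => gradient (H p.1) p.2) (J ×ˢ {(0 : Euc n)}ᶜ) :=
  (InnerProductSpace.toDual ℝ (Euc n)).symm.contDiff.comp_contDiffOn
    (slice_fderiv_contDiffOn hJ (isOpen_punct n) hs)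

lemma hessOp_contDiffOn {n : ℕ} {J : Set ℝ} (hJ : UniqueDiffOn ℝ J) {H : ℝ → Euc n → ℝ}
    (hs : ContDiffOn ℝ (⊤ : ℕ∞) (fun p : ℝ × Euc n => H p.1 p.2) (J ×ˢ {(0 : Euc n)}ᶜ)) :
    ContDiffOn ℝ (⊤ : ℕ∞) (fun p : ℝ × Euc n => hessOp n (H p.1) p.2) (J ×ˢ {(0 : Euc n)}ᶜ) :=
  slice_fderiv_contDiffOn hJ (isOpen_punct n) (G := fun t => gradient (H t))
    (gradient_contDiffOn hJ hs)

lemma sphDet_continuousOn {n : ℕ} {J : Set ℝ} (hJ : UniqueDiffOn ℝ J) {H : ℝ → Euc n → ℝ}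
    (hs : ContDiffOn ℝ (⊤ : ℕ∞) (fun p : ℝ × Euc n => H p.1 p.2) (J ×ˢ {(0 : Euc n)}ᶜ)) :
    ContinuousOn (fun p : ℝ × Euc n => sphDet n (H p.1) p.2) (J ×ˢ {(0 : Euc n)}ᶜ) := by
  have h1 : ContinuousOn (fun p : ℝ × Euc n => aOp n (H p.1) p.2) (J ×ˢ {(0 : Euc n)}ᶜ) := by
    refine (hessOp_contDiffOn hJ hs).continuousOn.add (Continuous.continuousOn ?_)
    exact (ContinuousLinearMap.smulRightL ℝ (Euc n) (Euc n)).continuous₂.comp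
      (((innerSL ℝ).continuous.comp continuous_snd).prodMk continuous_snd)
  exact ContinuousLinearMap.continuous_det.comp_continuousOn h1

/-- Standing data: a solution of the flow with positive smooth `f` and `φ`. -/
structure FlowData (n : ℕ) (f : Euc n → ℝ) (φ : ℝ → ℝ) (H : ℝ → Euc n → ℝ) : Prop where
  hn : 2 ≤ n
  f_smooth : ContDiffOn ℝ (⊤ : ℕ∞) f {(0 : Euc n)}ᶜ
  f_pos : ∀ x ∈ USphere n, 0 < f x
  φ_smooth : ContDiffOn ℝ (⊤ : ℕ∞) φ (Ioi 0)
  φ_pos : ∀ s ∈ Ioi (0 : ℝ), 0 < φ s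
  sol : IsFlowSol n f φ (Ici 0) H

namespace FlowData

variable {n : ℕ} {f : Euc n → ℝ} {φ : ℝ → ℝ} {H : ℝ → Euc n → ℝ}

lemma smooth (D : FlowData n f φ H) : ContDiffOn ℝ (⊤ : ℕ∞) (fun p : ℝ × Euc n => H p.1 p.2)
    (Ioi 0 ×ˢ {(0 : Euc n)}ᶜ) :=
  D.sol.smooth.mono (prod_mono Ioi_subset_Ici_self subset_rfl)

lemma body (D : FlowData n f φ H) {t : ℝ} (ht : 0 < t) : IsSupportFn n (H t) :=
  D.sol.body t ht.le

lemma hasDerivAt (D : FlowData n f φ H) {t : ℝ} (ht : 0 < t) {x : Euc n} (hx : x ≠ 0) :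
    HasDerivAt (fun s => H s x) (dt H t x) t :=
  hasDerivAt_dt (isOpen_punct n) D.smooth ht hx

lemma dt_smooth (D : FlowData n f φ H) :
    ContDiffOn ℝ (⊤ : ℕ∞) (fun p : ℝ × Euc n => dt H p.1 p.2) (Ioi 0 ×ˢ {(0 : Euc n)}ᶜ) :=
  dt_contDiffOn (isOpen_punct n) D.smooth

lemma dt_homog (D : FlowData n f φ H) {t : ℝ} (ht : 0 < t) {c : ℝ} (hc : 0 < c) (x : Euc n) :
    dt H t (c • x) = c * dt H t x := by
  have h1 : (fun s => H s (c • x)) =ᶠ[𝓝 t] fun s => c * H s x := by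
    filter_upwards [isOpen_Ioi.mem_nhds (mem_Ioi.2 ht)] with s hs using (D.body hs).homog c hc x
  simp only [dt]
  rw [h1.deriv_eq, deriv_const_mul_field]

/-- The density `f / φ(1/h)` appearing in the normalisation of the flow. -/
def aDens (f : Euc n → ℝ) (φ : ℝ → ℝ) (h : Euc n → ℝ) (x : Euc n) : ℝ := f x / φ (1 / h x)

lemma flow_eq (D : FlowData n f φ H) {t : ℝ} (ht : 0 < t) {x : Euc n} (hx : x ∈ USphere n) :
    dt H t x = H t x - flowEta n f φ (H t) * f x * ‖gradient (H t) x‖ ^ n /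
        (φ (1 / H t x) * sphDet n (H t) x) := by
  have h1 := (D.sol.eqn t ht.le x hx).hasDerivAt (Ici_mem_nhds ht)
  rw [(D.body ht).radTerm_eq hx] at h1
  exact (D.hasDerivAt ht (ne_zero_of_mem hx)).unique h1

lemma φ_inv_pos (D : FlowData n f φ H) {t : ℝ} (ht : 0 < t) {x : Euc n} (hx : x ∈ USphere n) :
    0 < φ (1 / H t x) := D.φ_pos _ (by have := (D.body ht).pos x hx; simp; positivity)

lemma aDens_pos (D : FlowData n f φ H) {t : ℝ} (ht : 0 < t) {x : Euc n} (hx : x ∈ USphere n) :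
    0 < aDens f φ (H t) x := div_pos (D.f_pos x hx) (D.φ_inv_pos ht hx)

lemma continuousOn_H (D : FlowData n f φ H) :
    ContinuousOn (fun p : ℝ × Euc n => H p.1 p.2) (Ioi 0 ×ˢ USphere n) :=
  D.smooth.continuousOn.mono (slab_sub n)

lemma continuousOn_f (D : FlowData n f φ H) :
    ContinuousOn (fun p : ℝ × Euc n => f p.2) (Ioi 0 ×ˢ USphere n) :=
  D.f_smooth.continuousOn.comp continuousOn_snd fun _ hp => ne_zero_of_mem hp.2

lemma continuousOn_comp_inv (D : FlowData n f φ H) {g : ℝ → ℝ} (hg : ContinuousOn g (Ioi 0)) :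
    ContinuousOn (fun p : ℝ × Euc n => g (1 / H p.1 p.2)) (Ioi 0 ×ˢ USphere n) := by
  refine hg.comp (continuousOn_const.div D.continuousOn_H fun p hp =>
    ((D.body hp.1).pos _ hp.2).ne') fun p hp => ?_
  have := (D.body hp.1).pos _ hp.2
  simp; positivity

lemma continuousOn_aDens (D : FlowData n f φ H) :
    ContinuousOn (fun p : ℝ × Euc n => aDens f φ (H p.1) p.2) (Ioi 0 ×ˢ USphere n) :=
  D.continuousOn_f.div (D.continuousOn_comp_inv D.φ_smooth.continuousOn) fun _ hp =>
    (D.φ_inv_pos hp.1 hp.2).ne'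

lemma continuousOn_dt (D : FlowData n f φ H) :
    ContinuousOn (fun p : ℝ × Euc n => dt H p.1 p.2) (Ioi 0 ×ˢ USphere n) :=
  D.dt_smooth.continuousOn.mono (slab_sub n)

lemma continuousOn_coneDens (D : FlowData n f φ H) :
    ContinuousOn (fun p : ℝ × Euc n => IsSupportFn.coneDens n (H p.1) p.2)
      (Ioi 0 ×ˢ USphere n) := by
  refine (D.continuousOn_H.mul ((sphDet_continuousOn isOpen_Ioi.uniqueDiffOn D.smooth).mono
    (slab_sub n))).div (((gradient_contDiffOn isOpen_Ioi.uniqueDiffOn D.smooth).continuousOn.mono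
    (slab_sub n)).norm.pow n) fun p hp => ?_
  exact pow_ne_zero _ (norm_ne_zero_iff.2 ((D.body hp.1).gradient_ne_zero (ne_zero_of_mem hp.2)))

lemma integrable_slice {G : ℝ → Euc n → ℝ}
    (hG : ContinuousOn (fun p : ℝ × Euc n => G p.1 p.2) (Ioi 0 ×ˢ USphere n)) {t : ℝ}
    (ht : 0 < t) : Integrable (fun x : USphere n => G t x) (sphMeasure n) :=
  IsSupportFn.integrable_sph_of_continuousOn (continuousOn_slice hG ht)

lemma continuousOn_coneDens_slice (D : FlowData n f φ H) {t : ℝ} (ht : 0 < t) :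
    ContinuousOn (IsSupportFn.coneDens n (H t)) (USphere n) :=
  continuousOn_slice (G := fun t => IsSupportFn.coneDens n (H t)) D.continuousOn_coneDens ht

lemma continuousOn_aDens_slice (D : FlowData n f φ H) {t : ℝ} (ht : 0 < t) :
    ContinuousOn (aDens f φ (H t)) (USphere n) :=
  continuousOn_slice (G := fun t => aDens f φ (H t)) D.continuousOn_aDens ht

lemma integrable_coneDens (D : FlowData n f φ H) {t : ℝ} (ht : 0 < t) :
    Integrable (fun x : USphere n => IsSupportFn.coneDens n (H t) x) (sphMeasure n) :=
  IsSupportFn.integrable_sph_of_continuousOn (D.continuousOn_coneDens_slice ht)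

lemma integrable_aDens (D : FlowData n f φ H) {t : ℝ} (ht : 0 < t) :
    Integrable (fun x : USphere n => aDens f φ (H t) x) (sphMeasure n) :=
  IsSupportFn.integrable_sph_of_continuousOn (D.continuousOn_aDens_slice ht)

lemma sphArea_pos (hn : 2 ≤ n) : 0 < sphArea n := by
  have h1 : sphMeasure n univ ≠ 0 := by
    have hb : volume (ball (0 : Euc n) 1) ≠ 0 := (measure_ball_pos _ _ one_pos).ne'
    have : n ≠ 0 := by omega
    unfold sphMeasure
    simpa [this] using hb
  exact ENNReal.toReal_pos h1 (measure_ne_top _ _)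

lemma integral_pos_of_pos {g : Euc n → ℝ} (hn : 2 ≤ n) (hg : ContinuousOn g (USphere n))
    (hp : ∀ x ∈ USphere n, 0 < g x) : 0 < ∫ x : USphere n, g x ∂(sphMeasure n) := by
  obtain ⟨x0, hx0⟩ := sphere_nonempty hn
  obtain ⟨y, hy, hmin⟩ := (isCompact_sphere (0 : Euc n) 1).exists_isMinOn ⟨x0, hx0⟩ hg
  have h1 : ∫ x : USphere n, g y ∂(sphMeasure n) ≤ ∫ x : USphere n, g x ∂(sphMeasure n) :=
    integral_mono (integrable_const _) (IsSupportFn.integrable_sph_of_continuousOn hg)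
      fun x => hmin x.2
  rw [integral_const] at h1
  exact lt_of_lt_of_le (mul_pos (sphArea_pos hn) (hp y hy)) h1

lemma intA_pos (D : FlowData n f φ H) {t : ℝ} (ht : 0 < t) :
    0 < sphInt n (aDens f φ (H t)) :=
  integral_pos_of_pos D.hn (D.continuousOn_aDens_slice ht) fun _ hx =>
    D.aDens_pos ht hx

lemma eta_pos (D : FlowData n f φ H) {t : ℝ} (ht : 0 < t) : 0 < flowEta n f φ (H t) :=
  div_pos (sphArea_pos D.hn) (D.intA_pos ht)

lemma eta_mul (D : FlowData n f φ H) {t : ℝ} (ht : 0 < t) :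
    flowEta n f φ (H t) * sphInt n (aDens f φ (H t)) = sphArea n :=
  div_mul_cancel₀ _ (D.intA_pos ht).ne'

lemma dt_div (D : FlowData n f φ H) {t : ℝ} (ht : 0 < t) {x : Euc n} (hx : x ∈ USphere n) :
    dt H t x / H t x = 1 - flowEta n f φ (H t) * aDens f φ (H t) x /
      IsSupportFn.coneDens n (H t) x := by
  have h1 := (D.body ht).pos x hx
  have h2 := (D.body ht).sphDet_pos hx
  have h3 := norm_pos_iff.2 ((D.body ht).gradient_ne_zero (ne_zero_of_mem hx))
  have h4 := D.φ_inv_pos ht hx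
  rw [D.flow_eq ht hx]
  unfold aDens IsSupportFn.coneDens
  field_simp

/-! ### Conservation of the entropy -/

/-- The cone-measure average of the logarithmic speed vanishes. -/
lemma integral_dt_cone (D : FlowData n f φ H) {t : ℝ} (ht : 0 < t) :
    ∫ x : USphere n, dt H t x / H t x * IsSupportFn.coneDens n (H t) x ∂(sphMeasure n) = 0 := by
  have h1 : ∀ x : USphere n, dt H t x / H t x * IsSupportFn.coneDens n (H t) x =
      IsSupportFn.coneDens n (H t) x - flowEta n f φ (H t) * aDens f φ (H t) x := by
    intro x
    have := ((D.body ht).coneDens_pos x.2).ne'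
    rw [D.dt_div ht x.2]; field_simp
  simp only [h1]
  rw [integral_sub (D.integrable_coneDens ht)
    ((D.integrable_aDens ht).const_mul _), integral_const_mul,
    (D.body ht).integral_coneDens_one D.hn]
  have := D.eta_mul ht
  rw [sphInt] at this
  rw [this, sub_self]

/-- Second-order Taylor bound for `h` in time, uniform in space and on compact time intervals. -/
lemma taylor (D : FlowData n f φ H) {a b : ℝ} (ha : 0 < a) :
    ∃ C : ℝ, 0 < C ∧ ∀ s ∈ Icc a b, ∀ t ∈ Icc a b, ∀ x ∈ USphere n,
      |H s x - H t x - (s - t) * dt H t x| ≤ C * (s - t) ^ 2 := by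
  have hsub : Icc a b ⊆ Ioi 0 := fun s hs => lt_of_lt_of_le ha hs.1
  have hd2 : ContinuousOn (fun p : ℝ × Euc n => dt (dt H) p.1 p.2) (Icc a b ×ˢ USphere n) :=
    (dt_contDiffOn (isOpen_punct n) D.dt_smooth).continuousOn.mono (prod_mono hsub (sphere_sub n))
  obtain ⟨C, hC0, hC⟩ := exists_bound_slab hd2
  refine ⟨C, hC0, fun s hs t ht x hx => ?_⟩
  have hx0 := ne_zero_of_mem hx
  have huIcc : uIcc t s ⊆ Icc a b := uIcc_subset_Icc ht hs
  have h1 : ∀ r ∈ Icc a b, |dt H r x - dt H t x| ≤ C * |r - t| := fun r hr =>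
    (convex_Icc a b).norm_image_sub_le_of_norm_hasDerivWithin_le (f := fun s => dt H s x)
      (f' := fun s => dt (dt H) s x)
      (fun y hy => (hasDerivAt_dt (isOpen_punct n) D.dt_smooth (hsub hy) hx0).hasDerivWithinAt)
      (fun y hy => hC y hy x hx) ht hr
  have h2 := (convex_uIcc t s).norm_image_sub_le_of_norm_hasDerivWithin_le
      (f := fun r => H r x - r * dt H t x) (f' := fun r => dt H r x - 1 * dt H t x)
      (C := C * |s - t|)
      (fun y hy => ((D.hasDerivAt (hsub (huIcc hy)) hx0).sub
        ((hasDerivAt_id y).mul_const _)).hasDerivWithinAt)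
      (fun y hy => by
        rw [one_mul]
        exact (h1 y (huIcc hy)).trans (mul_le_mul_of_nonneg_left (abs_sub_left_of_mem_uIcc hy)
          hC0.le)) left_mem_uIcc right_mem_uIcc
  have h3 : H s x - s * dt H t x - (H t x - t * dt H t x) = H s x - H t x - (s - t) * dt H t x := by
    ring
  rw [h3, Real.norm_eq_abs, Real.norm_eq_abs, mul_assoc, ← sq, sq_abs] at h2
  exact h2

/-- The entropy changes at most quadratically in the time increment, because its first-order
variation is the vanishing integral of `integral_dt_cone`. -/
lemma entropy_quadratic (D : FlowData n f φ H) {a b : ℝ} (ha : 0 < a) :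
    ∃ C : ℝ, 0 < C ∧ ∀ s ∈ Icc a b, ∀ t ∈ Icc a b,
      entropy n (H s) - entropy n (H t) ≤ C * (s - t) ^ 2 := by
  have hsub : Icc a b ⊆ Ioi 0 := fun s hs => lt_of_lt_of_le ha hs.1
  obtain ⟨C1, hC1, hT⟩ := D.taylor (b := b) ha
  have hcw : ContinuousOn (fun p : ℝ × Euc n => IsSupportFn.coneDens n (H p.1) p.2 / H p.1 p.2)
      (Ioi 0 ×ˢ USphere n) :=
    D.continuousOn_coneDens.div D.continuousOn_H fun p hp => ((D.body hp.1).pos _ hp.2).ne'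
  obtain ⟨C2, hC2, hB⟩ := exists_bound_slab (G := fun t x => IsSupportFn.coneDens n (H t) x / H t x)
    (hcw.mono (prod_mono hsub subset_rfl))
  refine ⟨C1 * C2 * sphArea n, mul_pos (mul_pos hC1 hC2) (sphArea_pos D.hn),
    fun s hs t ht => ?_⟩
  have ht0 := hsub ht
  have hs0 := hsub hs
  refine (IsSupportFn.entropy_sub_le D.hn (D.body ht0) (D.body hs0)).trans ?_
  have hI1 : Integrable (fun x : USphere n => dt H t x / H t x * IsSupportFn.coneDens n (H t) x)
      (sphMeasure n) := integrable_slice (G := fun t x => dt H t x / H t x *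
        IsSupportFn.coneDens n (H t) x) ((D.continuousOn_dt.div D.continuousOn_H fun p hp =>
          ((D.body hp.1).pos _ hp.2).ne').mul D.continuousOn_coneDens) ht0
  have hI2 : Integrable (fun x : USphere n => (H s x - H t x) / H t x *
      IsSupportFn.coneDens n (H t) x) (sphMeasure n) := by
    refine IsSupportFn.integrable_sph_of_continuousOn (g := fun x => (H s x - H t x) / H t x *
      IsSupportFn.coneDens n (H t) x) ?_
    have c1 := continuousOn_slice D.continuousOn_H hs0
    have c2 := continuousOn_slice D.continuousOn_H ht0
    exact ((c1.sub c2).div c2 fun x hx => ((D.body ht0).pos _ hx).ne').mul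
      (D.continuousOn_coneDens_slice ht0)
  calc _ ≤ ∫ x : USphere n, ((s - t) * (dt H t x / H t x * IsSupportFn.coneDens n (H t) x) +
        C1 * C2 * (s - t) ^ 2) ∂(sphMeasure n) := by
        refine integral_mono hI2 ((hI1.const_mul _).add (integrable_const _)) fun x => ?_
        have hw : 0 < IsSupportFn.coneDens n (H t) x / H t x :=
          div_pos ((D.body ht0).coneDens_pos x.2) ((D.body ht0).pos _ x.2)
        have hw2 := (abs_le.1 (hB t ht x x.2)).2
        have hT' := (abs_le.1 (hT s hs t ht x x.2)).2
        have e1 : (H s x - H t x) / H t x * IsSupportFn.coneDens n (H t) x =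
          (H s x - H t x) * (IsSupportFn.coneDens n (H t) x / H t x) := by ring
        have e2 : dt H t x / H t x * IsSupportFn.coneDens n (H t) x =
          dt H t x * (IsSupportFn.coneDens n (H t) x / H t x) := by ring
        simp only [e1, e2]
        set w := IsSupportFn.coneDens n (H t) x / H t x
        have h5 := mul_le_mul_of_nonneg_right hT' hw.le
        have h6 : C1 * (s - t) ^ 2 * w ≤ C1 * (s - t) ^ 2 * C2 :=
          mul_le_mul_of_nonneg_left hw2 (by positivity)
        nlinarith
    _ = _ := by
        rw [integral_add (hI1.const_mul _) (integrable_const _), integral_const_mul,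
          D.integral_dt_cone ht0, integral_const]
        simp only [smul_eq_mul, Measure.real, sphArea]
        ring

/-- The flow conserves the entropy. -/
lemma entropy_const (D : FlowData n f φ H) {t : ℝ} (ht : 0 < t) :
    entropy n (H t) = entropy n (H 1) := by
  have hd : ∀ t ∈ Ioi (0 : ℝ), HasDerivAt (fun s => entropy n (H s)) 0 t := by
    intro t ht
    have ht' : 0 < t := ht
    obtain ⟨C, hC, hE⟩ := D.entropy_quadratic (a := t / 2) (b := 2 * t) (half_pos ht)
    rw [hasDerivAt_iff_isLittleO]
    have hO : (fun s => entropy n (H s) - entropy n (H t) - (s - t) • (0 : ℝ)) =O[𝓝 t]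
        fun s => (s - t) ^ 2 := by
      refine Asymptotics.IsBigO.of_bound C ?_
      have hnh : Icc (t / 2) (2 * t) ∈ 𝓝 t := Icc_mem_nhds (by linarith) (by linarith)
      filter_upwards [hnh] with s hs
      have htm : t ∈ Icc (t / 2) (2 * t) := ⟨by linarith, by linarith⟩
      have h1 := hE s hs t htm
      have h2 := hE t htm s hs
      simp only [smul_zero, sub_zero, Real.norm_eq_abs, abs_pow, sq_abs]
      rw [abs_le]
      constructor <;> nlinarith
    refine hO.trans_isLittleO ?_
    have h3 : (fun s : ℝ => (s - t) ^ 2) =o[𝓝 t] fun s => (s - t) ^ 1 := by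
      have h4 : Tendsto (fun s : ℝ => s - t) (𝓝 t) (𝓝 0) := by
        have : Continuous fun s : ℝ => s - t := by fun_prop
        simpa using this.tendsto t
      exact (Asymptotics.isLittleO_pow_pow (𝕜 := ℝ) (by norm_num : 1 < 2)).comp_tendsto h4
    simpa using h3
  refine isOpen_Ioi.is_const_of_deriv_eq_zero (convex_Ioi 0).isPreconnected
    (f := fun s => entropy n (H s)) (fun t ht => (hd t ht).differentiableAt.differentiableWithinAt)
    (fun t ht => (hd t ht).deriv) ht (by simp)

end FlowData

/-! ### Uniform bounds on the support function -/

/-- Thin bands around great subspheres have uniformly small measure. -/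
lemma exists_band {n : ℕ} (hn : 2 ≤ n) {δ : ℝ} (hδ : 0 < δ) :
    ∃ s ∈ Ioo (0 : ℝ) 1, ∀ x ∈ USphere n,
      (sphMeasure n).real {u : USphere n | |⟪x, (u : Euc n)⟫| < s} ≤ δ := by
  obtain ⟨C, hC0, hC⟩ := exists_log_bound hn
  have hL : 0 < (C + 1) / δ := by positivity
  refine ⟨Real.exp (-((C + 1) / δ)), ⟨Real.exp_pos _, by simpa using hL⟩, fun x hx => ?_⟩
  have hm : Measurable fun u : USphere n => ENNReal.ofReal (-Real.log |⟪x, (u : Euc n)⟫|) :=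
    ENNReal.measurable_ofReal.comp (Real.measurable_log.comp
      ((measurable_const (a := x)).inner measurable_subtype_coe).abs).neg
  have h1 : sphMeasure n {u : USphere n | |⟪x, (u : Euc n)⟫| < Real.exp (-((C + 1) / δ))} ≤
      sphMeasure n {u : USphere n | ENNReal.ofReal ((C + 1) / δ) ≤
        ENNReal.ofReal (-Real.log |⟪x, (u : Euc n)⟫|)} := by
    refine measure_mono_ae ?_
    filter_upwards [ae_inner_ne_zero hn hx] with u hu hlt
    refine ENNReal.ofReal_le_ofReal ?_
    have := Real.log_le_log (abs_pos.2 hu) (le_of_lt hlt)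
    rw [Real.log_exp] at this
    linarith
  have h2 := mul_meas_ge_le_lintegral (μ := sphMeasure n) hm (ENNReal.ofReal ((C + 1) / δ))
  have h3 := (mul_le_mul_right h1 (ENNReal.ofReal ((C + 1) / δ))).trans (h2.trans (hC x hx))
  have h4 := ENNReal.toReal_mono ENNReal.ofReal_ne_top h3
  rw [ENNReal.toReal_mul, ENNReal.toReal_ofReal hL.le, ENNReal.toReal_ofReal hC0] at h4
  change (sphMeasure n _).toReal ≤ δ
  rw [div_mul_eq_mul_div, div_le_iff₀ hδ] at h4
  by_contra hcon
  push Not at hcon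
  nlinarith

namespace IsSupportFn

variable {n : ℕ} {h : Euc n → ℝ}

/-- An origin-symmetric body contains the segment joining its farthest boundary points `±L θ`,
which gives `L |⟪θ, y⟫| ≤ h(y)`. -/
lemma exists_max_dir (hn : 2 ≤ n) (hh : IsSupportFn n h) (he : ∀ x, h (-x) = h x) :
    ∃ L : ℝ, 0 < L ∧ (∀ x ∈ USphere n, h x ≤ L) ∧ ∃ θ ∈ USphere n, ∀ y ∈ USphere n,
      L * |⟪θ, y⟫| ≤ h y := by
  obtain ⟨x0, hx0⟩ := sphere_nonempty hn
  obtain ⟨x, hx, hmax⟩ := (isCompact_sphere (0 : Euc n) 1).exists_isMaxOn ⟨x0, hx0⟩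
    (hh.smooth.continuousOn.mono (sphere_sub n))
  have hxne := ne_zero_of_mem hx
  have hg : 0 < ‖gradient h x‖ := norm_pos_iff.2 (hh.gradient_ne_zero hxne)
  have hgL : h x ≤ ‖gradient h x‖ := by
    rw [← hh.euler hxne]
    have := real_inner_le_norm (gradient h x) x
    rwa [norm_of_mem hx, mul_one] at this
  refine ⟨h x, hh.pos x hx, fun y hy => hmax hy, ‖gradient h x‖⁻¹ • gradient h x, ?_, fun y hy => ?_⟩
  · simp [norm_smul, hh.gradient_ne_zero hxne]
  · have hyne := ne_zero_of_mem hy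
    have h1 : |⟪gradient h x, y⟫| ≤ h y := by
      rw [abs_le]
      constructor
      · have := hh.inner_gradient_le hxne (neg_ne_zero.2 hyne)
        rw [inner_neg_right, he] at this; linarith
      · exact hh.inner_gradient_le hxne hyne
    rw [inner_smul_left, abs_mul]
    simp only [map_inv₀, conj_trivial, abs_inv, abs_norm]
    calc h x * (‖gradient h x‖⁻¹ * |⟪gradient h x, y⟫|)
        = h x / ‖gradient h x‖ * |⟪gradient h x, y⟫| := by ring
      _ ≤ 1 * |⟪gradient h x, y⟫| := by gcongr; exact (div_le_one hg).2 hgL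
      _ ≤ _ := by simpa using h1

lemma le_norm_gradient (hh : IsSupportFn n h) {x : Euc n} (hx : x ∈ USphere n) :
    h x ≤ ‖gradient h x‖ := by
  rw [← hh.euler (ne_zero_of_mem hx)]
  have := real_inner_le_norm (gradient h x) x
  rwa [norm_of_mem hx, mul_one] at this

/-- The boundary point `∇h(x)` has norm at most `max h`, since `h(u) ≥ |∇h(x)|` in its own
direction `u`. -/
lemma norm_gradient_le (hh : IsSupportFn n h) {L : ℝ} (hL : ∀ x ∈ USphere n, h x ≤ L) {x : Euc n}
    (hx : x ∈ USphere n) : ‖gradient h x‖ ≤ L := by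
  have hxne := ne_zero_of_mem hx
  have hg : 0 < ‖gradient h x‖ := norm_pos_iff.2 (hh.gradient_ne_zero hxne)
  have hu : ‖gradient h x‖⁻¹ • gradient h x ∈ USphere n := by
    simp [norm_smul, hh.gradient_ne_zero hxne]
  have h1 := (hh.inner_gradient_le hxne (ne_zero_of_mem hu)).trans (hL _ hu)
  rw [inner_smul_right, real_inner_self_eq_norm_sq] at h1
  have : ‖gradient h x‖⁻¹ * ‖gradient h x‖ ^ 2 = ‖gradient h x‖ := by field_simp
  rwa [this] at h1

end IsSupportFn

namespace FlowData

variable {n : ℕ} {f : Euc n → ℝ} {φ : ℝ → ℝ} {H : ℝ → Euc n → ℝ}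

/-- Conservation of the entropy keeps the body from becoming thin. -/
lemma exists_lower (D : FlowData n f φ H) :
    ∃ w : ℝ, 0 < w ∧ ∀ t > 0, ∀ x ∈ USphere n, w ≤ H t x := by
  obtain ⟨C, hC0, hC⟩ := exists_log_bound D.hn
  refine ⟨Real.exp ((entropy n (H 1) - C) / sphArea n), Real.exp_pos _, fun t ht x hx => ?_⟩
  have h1 := IsSupportFn.entropy_le hC0 hC D.hn (D.body ht) (D.sol.symm t (le_of_lt ht)) hx
  rw [D.entropy_const ht] at h1
  rw [← Real.le_log_iff_exp_le ((D.body ht).pos x hx), div_le_iff₀ (sphArea_pos D.hn)]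
  linarith

/-- The normalisation makes `∫ a ∂ₜh/h ≤ 0` for the weight `a = f/φ(1/h)`. -/
lemma integral_a_dt_nonpos (D : FlowData n f φ H) {t : ℝ} (ht : 0 < t) :
    ∫ x : USphere n, aDens f φ (H t) x * (dt H t x / H t x) ∂(sphMeasure n) ≤ 0 := by
  have hη := D.eta_pos ht
  have hI : Integrable (fun x : USphere n => aDens f φ (H t) x * (dt H t x / H t x))
      (sphMeasure n) := integrable_slice
        (G := fun t x => aDens f φ (H t) x * (dt H t x / H t x))
        (D.continuousOn_aDens.mul (D.continuousOn_dt.div D.continuousOn_H fun p hp =>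
          ((D.body hp.1).pos _ hp.2).ne')) ht
  calc _ ≤ ∫ x : USphere n, ((flowEta n f φ (H t))⁻¹ * IsSupportFn.coneDens n (H t) x -
        aDens f φ (H t) x) ∂(sphMeasure n) := by
        refine integral_mono hI (((D.integrable_coneDens ht).const_mul _).sub
          (D.integrable_aDens ht)) fun x => ?_
        have hb := (D.body ht).coneDens_pos x.2
        simp only [D.dt_div ht x.2]
        set a := aDens f φ (H t) x
        set b := IsSupportFn.coneDens n (H t) x
        set η := flowEta n f φ (H t)
        -- arithmetic-geometric mean inequality `2 a ≤ η a²/b + b/η`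
        have h1 : η⁻¹ * b - a - a * (1 - η * a / b) = (b - η * a) ^ 2 / (η * b) := by
          field_simp
        have h2 : 0 ≤ (b - η * a) ^ 2 / (η * b) := by positivity
        linarith
    _ = 0 := by
        rw [integral_sub ((D.integrable_coneDens ht).const_mul _) (D.integrable_aDens ht),
          integral_const_mul, (D.body ht).integral_coneDens_one D.hn, ← D.eta_mul ht, sphInt]
        field_simp
        ring

/-- Monotonicity of the Orlicz functional `∫ f ℜ(1/h)`, with `c = ±1` for the two conditions. -/
lemma orlicz_mono (D : FlowData n f φ H) {R : ℝ → ℝ} {c : ℝ}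
    (hR : ∀ s ∈ Ioi (0 : ℝ), HasDerivAt R (c * (1 / (s * φ s))) s) :
    ∀ t ≥ 1, c * ∫ x : USphere n, f x * R (1 / H 1 x) ∂(sphMeasure n) ≤
      c * ∫ x : USphere n, f x * R (1 / H t x) ∂(sphMeasure n) := by
  have hRc : ContinuousOn R (Ioi 0) := fun s hs => (hR s hs).continuousAt.continuousWithinAt
  have hpos : ∀ t > 0, ∀ x ∈ USphere n, 0 < H t x := fun t ht x hx => (D.body ht).pos x hx
  have hd : ∀ t > 0, ∀ x ∈ USphere n, HasDerivAt (fun s => f x * R (1 / H s x))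
      (-c * (aDens f φ (H t) x * (dt H t x / H t x))) t := by
    intro t ht x hx
    have hp := hpos t ht x hx
    have hφ := D.φ_inv_pos ht hx
    have h1 : HasDerivAt (fun s => 1 / H s x) (-dt H t x / H t x ^ 2) t := by
      have := (D.hasDerivAt ht (ne_zero_of_mem hx)).inv hp.ne'
      simp only [one_div]
      exact this
    have h2 := ((hR (1 / H t x) (by simpa using hp)).comp t h1).const_mul (f x)
    convert! h2 using 1
    unfold aDens; field_simp
  have hcont : ContinuousOn (fun p : ℝ × Euc n => f p.2 * R (1 / H p.1 p.2))
      (Ioi 0 ×ˢ USphere n) := D.continuousOn_f.mul (D.continuousOn_comp_inv hRc)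
  have hcont' : ContinuousOn (fun p : ℝ × Euc n => -c * (aDens f φ (H p.1) p.2 *
      (dt H p.1 p.2 / H p.1 p.2))) (Ioi 0 ×ˢ USphere n) :=
    continuousOn_const.mul (D.continuousOn_aDens.mul (D.continuousOn_dt.div D.continuousOn_H
      fun p hp => ((D.body hp.1).pos _ hp.2).ne'))
  have hJ : ∀ t > 0, HasDerivAt (fun s => c * ∫ x : USphere n, f x * R (1 / H s x) ∂(sphMeasure n))
      (c * ∫ x : USphere n, -c * (aDens f φ (H t) x * (dt H t x / H t x)) ∂(sphMeasure n)) t :=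
    fun t ht => (hasDerivAt_sphInt (G := fun t x => f x * R (1 / H t x))
      (G' := fun t x => -c * (aDens f φ (H t) x * (dt H t x / H t x))) hd hcont hcont' ht).const_mul c
  have hmono : MonotoneOn (fun s => c * ∫ x : USphere n, f x * R (1 / H s x) ∂(sphMeasure n))
      (Ioi 0) := by
    refine monotoneOn_of_deriv_nonneg (convex_Ioi 0)
      (fun t ht => (hJ t ht).continuousAt.continuousWithinAt) (fun t ht => ?_) fun t ht => ?_
    · rw [interior_Ioi] at ht; exact (hJ t ht).differentiableAt.differentiableWithinAt
    · rw [interior_Ioi] at ht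
      rw [(hJ t ht).deriv, integral_const_mul]
      have := D.integral_a_dt_nonpos ht
      nlinarith [mul_self_nonneg c]
  intro t ht
  exact hmono (mem_Ioi.2 one_pos) (mem_Ioi.2 (by linarith)) ht

/-- The range of `f` on the sphere. -/
lemma f_bounds (D : FlowData n f φ H) :
    ∃ m M : ℝ, 0 < m ∧ 0 < M ∧ ∀ x ∈ USphere n, m ≤ f x ∧ f x ≤ M := by
  obtain ⟨x0, hx0⟩ := sphere_nonempty D.hn
  have hc : ContinuousOn f (USphere n) := D.f_smooth.continuousOn.mono (sphere_sub n)
  obtain ⟨x, hx, hmin⟩ := (isCompact_sphere (0 : Euc n) 1).exists_isMinOn ⟨x0, hx0⟩ hc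
  obtain ⟨y, hy, hmax⟩ := (isCompact_sphere (0 : Euc n) 1).exists_isMaxOn ⟨x0, hx0⟩ hc
  exact ⟨f x, f y, D.f_pos x hx, D.f_pos y hy, fun z hz => ⟨hmin hz, hmax hz⟩⟩

lemma integrable_fR (D : FlowData n f φ H) {R : ℝ → ℝ} (hRc : ContinuousOn R (Ioi 0)) {t : ℝ}
    (ht : 0 < t) : Integrable (fun x : USphere n => f x * R (1 / H t x)) (sphMeasure n) :=
  integrable_slice (G := fun t x => f x * R (1 / H t x))
    (D.continuousOn_f.mul (D.continuousOn_comp_inv hRc)) ht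

lemma measurableSet_band (θ : Euc n) (s : ℝ) :
    MeasurableSet {u : USphere n | |⟪θ, (u : Euc n)⟫| < s} :=
  measurableSet_lt ((measurable_const (a := θ)).inner measurable_subtype_coe).abs measurable_const

/-- Upper bound on `h` under an increasing `ℜ` with `ℜ(0⁺) = 0`. -/
lemma exists_upper_I (D : FlowData n f φ H) {R : ℝ → ℝ} (hRp : ∀ s ∈ Ioi (0 : ℝ), 0 < R s)
    (hRm : StrictMonoOn R (Ioi 0)) (hR0 : Tendsto R (𝓝[>] (0 : ℝ)) (𝓝 0))
    (hR : ∀ s ∈ Ioi (0 : ℝ), HasDerivAt R (1 / (s * φ s)) s) :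
    ∃ M : ℝ, ∀ t ≥ 1, ∀ x ∈ USphere n, H t x ≤ M := by
  obtain ⟨w, hw, hwH⟩ := D.exists_lower
  obtain ⟨m, M, hm, hM, hf⟩ := D.f_bounds
  have hS := sphArea_pos D.hn
  have hRc : ContinuousOn R (Ioi 0) := fun s hs => (hR s hs).continuousAt.continuousWithinAt
  set J1 := ∫ x : USphere n, f x * R (1 / H 1 x) ∂(sphMeasure n) with hJ1
  have hJ1p : 0 < J1 := integral_pos_of_pos (g := fun x => f x * R (1 / H 1 x)) D.hn
    (continuousOn_slice (G := fun t x => f x * R (1 / H t x))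
      (D.continuousOn_f.mul (D.continuousOn_comp_inv hRc)) (mem_Ioi.2 one_pos))
    fun x hx => mul_pos (D.f_pos x hx) (hRp _ (by simpa using (D.body one_pos).pos x hx))
  have hRw : 0 < R (1 / w) := hRp _ (by simpa using hw)
  obtain ⟨s, ⟨hs0, hs1⟩, hband⟩ := exists_band D.hn (δ := J1 / (3 * M * R (1 / w))) (by positivity)
  have hev : ∀ᶠ r in 𝓝[>] (0 : ℝ), R r < J1 / (3 * M * sphArea n) :=
    hR0.eventually_lt_const (by positivity)
  obtain ⟨ε, hε, hεR⟩ := mem_nhdsGT_iff_exists_Ioo_subset.1 hev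
  have hε' : 0 < ε := hε
  refine ⟨1 / (s * ε), fun t ht x hx => ?_⟩
  have ht0 : 0 < t := by linarith
  obtain ⟨L, hL, hLmax, θ, hθ, hLθ⟩ :=
    (D.body ht0).exists_max_dir D.hn (D.sol.symm t ht0.le)
  refine (hLmax x hx).trans ?_
  by_contra hcon
  push Not at hcon
  have hLs : 0 < L * s := mul_pos hL hs0
  have hsmall : 1 / (L * s) ∈ Ioo 0 ε := by
    refine ⟨by positivity, ?_⟩
    rw [div_lt_iff₀ (by positivity)] at hcon
    rw [div_lt_iff₀ hLs]; linarith
  have hRs : R (1 / (L * s)) < J1 / (3 * M * sphArea n) := hεR hsmall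
  have hRs0 := hRp _ (mem_Ioi.2 hsmall.1)
  have hmon := D.orlicz_mono (R := R) (c := 1) (by simpa using hR) t ht
  rw [one_mul, one_mul] at hmon
  set A : Set (USphere n) := {u : USphere n | |⟪θ, (u : Euc n)⟫| < s} with hA
  have hAm : MeasurableSet A := measurableSet_band θ s
  have hle : ∫ x : USphere n, f x * R (1 / H t x) ∂(sphMeasure n) ≤
      ∫ x : USphere n, (A.indicator (fun _ => M * R (1 / w)) x + M * R (1 / (L * s)))
        ∂(sphMeasure n) := by
    refine integral_mono (D.integrable_fR hRc ht0) (((integrable_const _).indicator hAm).add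
      (integrable_const _)) fun y => ?_
    have hp := (D.body ht0).pos _ y.2
    have hRH := hRp (1 / H t y) (by simpa using hp)
    obtain ⟨-, hfM⟩ := hf y y.2
    by_cases hy : y ∈ A
    · simp only [indicator_of_mem hy]
      have h1 : R (1 / H t y) ≤ R (1 / w) := hRm.monotoneOn (by simpa using hp) (by simpa using hw)
        (one_div_le_one_div_of_le hw (hwH t ht0 y y.2))
      have h2 : f y * R (1 / H t y) ≤ M * R (1 / w) := mul_le_mul hfM h1 hRH.le hM.le
      have h3 := mul_pos hM hRs0
      linarith
    · simp only [indicator_of_notMem hy, zero_add]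
      have h0 : s ≤ |⟪θ, (y : Euc n)⟫| := not_lt.1 hy
      have h1 : R (1 / H t y) ≤ R (1 / (L * s)) := hRm.monotoneOn (by simpa using hp) hsmall.1
        (one_div_le_one_div_of_le hLs ((mul_le_mul_of_nonneg_left h0 hL.le).trans (hLθ y y.2)))
      exact mul_le_mul hfM h1 hRH.le hM.le
  rw [integral_add ((integrable_const _).indicator hAm) (integrable_const _),
    integral_indicator_const _ hAm, integral_const] at hle
  simp only [smul_eq_mul] at hle
  have hSr : (sphMeasure n).real univ = sphArea n := rfl
  rw [hSr] at hle
  have hb := hband θ hθ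
  have h5 : (sphMeasure n).real A * (M * R (1 / w)) ≤ J1 / 3 := by
    calc _ ≤ J1 / (3 * M * R (1 / w)) * (M * R (1 / w)) := by gcongr
      _ = J1 / 3 := by field_simp
  have h6 : sphArea n * (M * R (1 / (L * s))) ≤ J1 / 3 := by
    calc _ ≤ sphArea n * (M * (J1 / (3 * M * sphArea n))) := by gcongr
      _ = J1 / 3 := by field_simp
  linarith

/-- Upper bound on `h` under a decreasing `ℜ` with `ℜ(0⁺) = ∞`. -/
lemma exists_upper_II (D : FlowData n f φ H) {R : ℝ → ℝ} (hRp : ∀ s ∈ Ioi (0 : ℝ), 0 < R s)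
    (hRm : StrictAntiOn R (Ioi 0)) (hR0 : Tendsto R (𝓝[>] (0 : ℝ)) atTop)
    (hR : ∀ s ∈ Ioi (0 : ℝ), HasDerivAt R (-(1 / (s * φ s))) s) :
    ∃ M : ℝ, ∀ t ≥ 1, ∀ x ∈ USphere n, H t x ≤ M := by
  obtain ⟨m, M, hm, hM, hf⟩ := D.f_bounds
  have hS := sphArea_pos D.hn
  have hRc : ContinuousOn R (Ioi 0) := fun s hs => (hR s hs).continuousAt.continuousWithinAt
  set J1 := ∫ x : USphere n, f x * R (1 / H 1 x) ∂(sphMeasure n) with hJ1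
  obtain ⟨s, ⟨hs0, hs1⟩, hband⟩ := exists_band D.hn (δ := sphArea n / 2) (by positivity)
  have hev : ∀ᶠ r in 𝓝[>] (0 : ℝ), J1 / (m * (sphArea n / 2)) < R r := hR0.eventually_gt_atTop _
  obtain ⟨ε, hε, hεR⟩ := mem_nhdsGT_iff_exists_Ioo_subset.1 hev
  have hε' : 0 < ε := hε
  refine ⟨1 / (s * ε), fun t ht x hx => ?_⟩
  have ht0 : 0 < t := by linarith
  obtain ⟨L, hL, hLmax, θ, hθ, hLθ⟩ :=
    (D.body ht0).exists_max_dir D.hn (D.sol.symm t ht0.le)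
  refine (hLmax x hx).trans ?_
  by_contra hcon
  push Not at hcon
  have hLs : 0 < L * s := mul_pos hL hs0
  have hsmall : 1 / (L * s) ∈ Ioo 0 ε := by
    refine ⟨by positivity, ?_⟩
    rw [div_lt_iff₀ (by positivity)] at hcon
    rw [div_lt_iff₀ hLs]; linarith
  have hRs : J1 / (m * (sphArea n / 2)) < R (1 / (L * s)) := hεR hsmall
  have hRs0 := hRp _ (mem_Ioi.2 hsmall.1)
  have hmon := D.orlicz_mono (R := R) (c := -1) (by simpa using hR) t ht
  set A : Set (USphere n) := {u : USphere n | |⟪θ, (u : Euc n)⟫| < s} with hA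
  have hAm : MeasurableSet A := measurableSet_band θ s
  have hle : ∫ x : USphere n, (m * R (1 / (L * s)) - A.indicator (fun _ => m * R (1 / (L * s))) x)
        ∂(sphMeasure n) ≤ ∫ x : USphere n, f x * R (1 / H t x) ∂(sphMeasure n) := by
    refine integral_mono ((integrable_const _).sub ((integrable_const _).indicator hAm))
      (D.integrable_fR hRc ht0) fun y => ?_
    have hp := (D.body ht0).pos _ y.2
    have hRH := hRp (1 / H t y) (by simpa using hp)
    obtain ⟨hfm, -⟩ := hf y y.2
    by_cases hy : y ∈ A
    · simp only [indicator_of_mem hy, sub_self]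
      exact mul_nonneg (hm.le.trans hfm) hRH.le
    · simp only [indicator_of_notMem hy, sub_zero]
      have h0 : s ≤ |⟪θ, (y : Euc n)⟫| := not_lt.1 hy
      have h1 : R (1 / (L * s)) ≤ R (1 / H t y) := hRm.antitoneOn (by simpa using hp) hsmall.1
        (one_div_le_one_div_of_le hLs ((mul_le_mul_of_nonneg_left h0 hL.le).trans (hLθ y y.2)))
      exact mul_le_mul hfm h1 hRs0.le (hm.le.trans hfm)
  rw [integral_sub (integrable_const _) ((integrable_const _).indicator hAm),
    integral_indicator_const _ hAm, integral_const] at hle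
  simp only [smul_eq_mul] at hle
  have hSr : (sphMeasure n).real univ = sphArea n := rfl
  rw [hSr] at hle
  have hb := hband θ hθ
  have h5 : (sphMeasure n).real A * (m * R (1 / (L * s))) ≤
      sphArea n / 2 * (m * R (1 / (L * s))) := by gcongr
  rw [div_lt_iff₀ (by positivity)] at hRs
  nlinarith

/-- Two-sided bounds on the support functions for `t ≥ 1`. -/
lemma exists_C0_bounds (D : FlowData n f φ H) {h₀ : Euc n → ℝ}
    (hcond : CondI n f φ h₀ ∨ CondII φ) :
    ∃ w L : ℝ, 0 < w ∧ w ≤ L ∧ ∀ t ≥ 1, ∀ x ∈ USphere n, w ≤ H t x ∧ H t x ≤ L := by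
  obtain ⟨w, hw, hwH⟩ := D.exists_lower
  have hup : ∃ M : ℝ, ∀ t ≥ 1, ∀ x ∈ USphere n, H t x ≤ M := by
    rcases hcond with ⟨R, h1, h2, h3, -, -, h4, -⟩ | ⟨R, h1, h2, h3, -, -, h4⟩
    · exact D.exists_upper_I h1 h2 h3 fun s hs => (h4 s hs).1
    · exact D.exists_upper_II h1 h2 h3 fun s hs => (h4 s hs).1
  obtain ⟨M, hM⟩ := hup
  exact ⟨w, max w M, hw, le_max_left _ _, fun t ht x hx =>
    ⟨hwH t (by linarith) x hx, (hM t ht x hx).trans (le_max_right _ _)⟩⟩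

end FlowData

/-! ### Calculus for the maximum principle -/

/-- Derivative of a determinant along a curve of operators that is diagonal at time `t`. -/
lemma hasDerivAt_det_of_diag {n : ℕ} {M : ℝ → Euc n →L[ℝ] Euc n} {M' : Euc n →L[ℝ] Euc n} {t : ℝ}
    (hM : HasDerivAt M M' t) (e : OrthonormalBasis (Fin n) ℝ (Euc n)) {l : Fin n → ℝ}
    (hl : ∀ i, 0 < l i) (he : ∀ i, M t (e i) = l i • e i) :
    HasDerivAt (fun s => (M s).det) ((∏ i, l i) * ∑ i, (l i)⁻¹ * ⟪e i, M' (e i)⟫) t := by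
  have hdet : ∀ A : Euc n →L[ℝ] Euc n, A.det =
      ∑ σ : Equiv.Perm (Fin n), (Equiv.Perm.sign σ : ℝ) * ∏ i, ⟪e (σ i), A (e i)⟫ := by
    intro A
    have h1 : A.det = LinearMap.det (A : Euc n →ₗ[ℝ] Euc n) := rfl
    rw [h1, ← LinearMap.det_toMatrix e.toBasis, Matrix.det_apply']
    refine Finset.sum_congr rfl fun σ _ => ?_
    simp [LinearMap.toMatrix_apply, OrthonormalBasis.coe_toBasis_repr_apply,
      OrthonormalBasis.repr_apply_apply]
  have hent : ∀ i j, HasDerivAt (fun s => ⟪e i, M s (e j)⟫) ⟪e i, M' (e j)⟫ t := by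
    intro i j
    have h1 : HasDerivAt (fun s => M s (e j)) (M' (e j)) t := by
      simpa using hM.clm_apply (hasDerivAt_const t (e j))
    simpa using (hasDerivAt_const t (e i)).inner ℝ h1
  have hval : ∀ i j, ⟪e i, M t (e j)⟫ = if i = j then l j else 0 := by
    intro i j
    rw [he, inner_smul_right, orthonormal_iff_ite.1 e.orthonormal i j]
    simp
  have hder : HasDerivAt (fun s => ∑ σ : Equiv.Perm (Fin n), (Equiv.Perm.sign σ : ℝ) *
      ∏ i, ⟪e (σ i), M s (e i)⟫) (∑ σ : Equiv.Perm (Fin n), (Equiv.Perm.sign σ : ℝ) *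
      ∑ i, (∏ j ∈ Finset.univ.erase i, ⟪e (σ j), M t (e j)⟫) • ⟪e (σ i), M' (e i)⟫) t :=
    HasDerivAt.fun_sum fun σ _ =>
      (HasDerivAt.fun_finsetProd fun i _ => hent (σ i) i).const_mul _
  simp only [hdet]
  convert! hder using 1
  rw [Finset.sum_eq_single (1 : Equiv.Perm (Fin n))]
  · simp only [Equiv.Perm.sign_one, Units.val_one, Int.cast_one, one_mul, Equiv.Perm.coe_one, id,
      hval, if_true, smul_eq_mul, Finset.mul_sum]
    refine Finset.sum_congr rfl fun i _ => ?_
    rw [← Finset.mul_prod_erase _ _ (Finset.mem_univ i)]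
    have := (hl i).ne'
    field_simp
  · intro σ _ hσ
    -- a nontrivial permutation moves two indices, so each product keeps an off-diagonal entry
    refine mul_eq_zero_of_right _ (Finset.sum_eq_zero fun i _ => ?_)
    have : ∃ j, j ≠ i ∧ σ j ≠ j := by
      by_contra! hcon
      refine hσ (Equiv.ext fun j => ?_)
      by_cases hj : j = i
      · subst hj
        by_contra hne
        have h2 := hcon (σ j) hne
        exact hne (σ.injective h2)
      · exact hcon j hj
    obtain ⟨j, hji, hσj⟩ := this
    rw [Finset.prod_eq_zero (Finset.mem_erase.2 ⟨hji, Finset.mem_univ j⟩), zero_smul]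
    rw [hval, if_neg hσj]
  · simp

/-- Necessary second-order condition at a local maximum. -/
lemma second_deriv_nonpos {g g' : ℝ → ℝ} {d : ℝ} {a : ℝ} (hmax : IsLocalMax g a)
    (hg : ∀ᶠ s in 𝓝 a, HasDerivAt g (g' s) s) (hg' : HasDerivAt g' d a) : g' a = 0 ∧ d ≤ 0 := by
  have h0 : g' a = 0 := hmax.hasDerivAt_eq_zero hg.self_of_nhds
  refine ⟨h0, ?_⟩
  by_contra! hd
  have e1 : deriv g =ᶠ[𝓝 a] g' := hg.mono fun s hs => hs.deriv
  have hdd : deriv (deriv g) a = d := by rw [e1.deriv_eq, hg'.deriv]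
  have hmin : IsLocalMin g a := isLocalMin_of_deriv_deriv_pos (by rw [hdd]; exact hd)
    (by rw [e1.self_of_nhds, h0]) hg.self_of_nhds.continuousAt
  have hconst : g =ᶠ[𝓝 a] fun _ => g a := by
    filter_upwards [hmax, hmin] with s h1 h2 using le_antisymm h1 h2
  have h3 : deriv g =ᶠ[𝓝 a] fun _ => 0 := by
    have := hconst.deriv
    simpa using this
  have : deriv (deriv g) a = 0 := by rw [h3.deriv_eq]; simp
  linarith

/-- A one-sided maximum from the left forces a nonnegative derivative. -/
lemma deriv_nonneg_of_left {g : ℝ → ℝ} {d a b : ℝ} (hab : b < a) (hd : HasDerivAt g d a)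
    (hle : ∀ s ∈ Ico b a, g s ≤ g a) : 0 ≤ d := by
  have h1 : Tendsto (slope g a) (𝓝[<] a) (𝓝 d) :=
    (hasDerivWithinAt_iff_tendsto_slope' (by simp)).1 (hd.hasDerivWithinAt (s := Iio a))
  refine ge_of_tendsto h1 ?_
  filter_upwards [Ico_mem_nhdsLT hab] with s hs
  rw [slope_def_field]
  exact div_nonneg_of_nonpos (by linarith [hle s hs]) (by linarith [hs.2])

/-- First time at which a function, negative at time `1`, reaches zero on a compact set. -/
lemma exists_first_time {X : Type*} [TopologicalSpace X] [T2Space X] {S : Set X} (hS : IsCompact S)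
    {Z : ℝ → X → ℝ} (hZ : ContinuousOn (fun p : ℝ × X => Z p.1 p.2) (Ici 1 ×ˢ S))
    (h1 : ∀ x ∈ S, Z 1 x < 0) {T : ℝ} (hT : 1 ≤ T) {y : X} (hy : y ∈ S) (hTy : 0 ≤ Z T y) :
    ∃ t0 > 1, ∃ x0 ∈ S, Z t0 x0 = 0 ∧ (∀ x ∈ S, Z t0 x ≤ 0) ∧ ∀ s ∈ Ico 1 t0, Z s x0 < 0 := by
  have hK : IsCompact (Icc 1 T ×ˢ S) := isCompact_Icc.prod hS
  have hsub : Icc 1 T ×ˢ S ⊆ Ici 1 ×ˢ S := prod_mono Icc_subset_Ici_self subset_rfl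
  have hB : IsCompact ((Icc 1 T ×ˢ S) ∩ (fun p : ℝ × X => Z p.1 p.2) ⁻¹' Ici 0) :=
    hK.of_isClosed_subset ((hZ.mono hsub).preimage_isClosed_of_isClosed hK.isClosed isClosed_Ici)
      inter_subset_left
  obtain ⟨⟨t0, x0⟩, ⟨⟨ht0, hx0⟩, hZ0⟩, hmin⟩ := hB.exists_isMinOn
    ⟨(T, y), ⟨⟨hT, le_rfl⟩, hy⟩, hTy⟩ continuous_fst.continuousOn
  simp only [mem_preimage, mem_Ici] at hZ0 ht0 hx0
  have hbefore : ∀ s ∈ Ico 1 t0, ∀ x ∈ S, Z s x < 0 := by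
    intro s hs x hx
    by_contra! hcon
    have := hmin (show (s, x) ∈ _ from ⟨⟨⟨hs.1, hs.2.le.trans ht0.2⟩, hx⟩, hcon⟩)
    exact absurd this (not_le.2 hs.2)
  have ht1 : 1 < t0 := by
    refine lt_of_le_of_ne ht0.1 fun h => ?_
    rw [← h] at hZ0
    linarith [h1 x0 hx0]
  have hle : ∀ x ∈ S, Z t0 x ≤ 0 := by
    intro x hx
    have hc : ContinuousWithinAt (fun s => Z s x) (Ici 1) t0 :=
      ContinuousOn.comp (f := fun s : ℝ => (s, x)) (g := fun p : ℝ × X => Z p.1 p.2) hZ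
        (by fun_prop) (fun s hs => ⟨hs, hx⟩) t0 ht1.le
    have hc' : Tendsto (fun s => Z s x) (𝓝[<] t0) (𝓝 (Z t0 x)) :=
      ((hc.continuousAt (Ici_mem_nhds ht1)).tendsto).mono_left nhdsWithin_le_nhds
    refine le_of_tendsto hc' ?_
    filter_upwards [Ico_mem_nhdsLT ht1] with s hs using (hbefore s hs x hx).le
  exact ⟨t0, ht1, x0, hx0, le_antisymm (hle x0 hx0) hZ0, hle, fun s hs => hbefore s hs x0 hx0⟩

/-- First- and second-order conditions at a unit vector `x` where the nonpositive function
`F + c |·|` vanishes. The quartic `1 + p/2 - p²/2`, `p = |·|² - 1`, is a lower barrier for the norm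
touching it on the unit sphere. -/
lemma touching_conditions {n : ℕ} {F : Euc n → ℝ} (hF : ContDiffOn ℝ (⊤ : ℕ∞) F {(0 : Euc n)}ᶜ)
    {c : ℝ} (hc : 0 ≤ c) (hle : ∀ y : Euc n, y ≠ 0 → F y + c * ‖y‖ ≤ 0) {x : Euc n}
    (hx : x ∈ USphere n) (h0 : F x + c = 0) :
    gradient F x = -c • x ∧ ∀ v : Euc n,
      ⟪v, hessOp n F x v⟫ ≤ -c * (‖v‖ ^ 2 - 4 * ⟪x, v⟫ ^ 2) := by
  have hx0 := ne_zero_of_mem hx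
  have hx1 := norm_of_mem hx
  have key : ∀ v : Euc n, ⟪gradient F x, v⟫ + c * ⟪x, v⟫ = 0 ∧
      ⟪hessOp n F x v, v⟫ + c * (‖v‖ ^ 2 - 4 * ⟪x, v⟫ ^ 2) ≤ 0 := by
    intro v
    set β := ⟪x, v⟫
    set ν := ‖v‖ ^ 2
    have hnorm : ∀ s : ℝ, ‖x + s • v‖ ^ 2 = 1 + (2 * s * β + s ^ 2 * ν) := by
      intro s
      rw [norm_add_sq_real, inner_smul_right, norm_smul, hx1, mul_pow, Real.norm_eq_abs, sq_abs]
      ring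
    let q : ℝ → ℝ := fun s => 1 + (2 * s * β + s ^ 2 * ν) / 2 - (2 * s * β + s ^ 2 * ν) ^ 2 / 2
    let q' : ℝ → ℝ := fun s => (2 * β + 2 * s * ν) / 2 -
      (2 * s * β + s ^ 2 * ν) * (2 * β + 2 * s * ν)
    have hp : ∀ s : ℝ, HasDerivAt (fun s : ℝ => 2 * s * β + s ^ 2 * ν) (2 * β + 2 * s * ν) s := by
      intro s
      have := (((hasDerivAt_id s).const_mul 2).mul_const β).add
        ((hasDerivAt_pow 2 s).mul_const ν)
      convert! this using 1
      simp
    have hq : ∀ s : ℝ, HasDerivAt q (q' s) s := by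
      intro s
      have := (((hp s).div_const 2).const_add 1).sub (((hp s).pow 2).div_const 2)
      convert! this using 1
      simp only [q']; push_cast; ring
    have hq' : HasDerivAt q' (ν - 4 * β ^ 2) 0 := by
      have h1 : HasDerivAt (fun s : ℝ => 2 * β + 2 * s * ν) (2 * ν) 0 := by
        have := (((hasDerivAt_id (0 : ℝ)).const_mul 2).mul_const ν).const_add (2 * β)
        simpa using this
      have := (h1.div_const 2).sub ((hp 0).mul h1)
      convert! this using 1
      simp; ring
    have hne : ∀ᶠ s : ℝ in 𝓝 0, x + s • v ≠ 0 := by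
      have : Continuous fun s : ℝ => x + s • v := by fun_prop
      exact this.continuousAt.eventually_ne (by simpa using hx0)
    have hqle : ∀ s : ℝ, q s ≤ ‖x + s • v‖ := by
      intro s
      set u := ‖x + s • v‖
      have hu : 0 ≤ u := norm_nonneg _
      have h2 : 2 * s * β + s ^ 2 * ν = u ^ 2 - 1 := by rw [hnorm]; ring
      simp only [q, h2]
      nlinarith [mul_nonneg (sq_nonneg (u - 1)) hu, mul_nonneg (sq_nonneg (u - 1)) (mul_nonneg hu hu)]
    have hloc : IsLocalMax (fun s : ℝ => F (x + s • v) + c * q s) 0 := by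
      filter_upwards [hne] with s hs
      have h3 := hle _ hs
      have h4 := mul_le_mul_of_nonneg_left (hqle s) hc
      simp [q, h0]
      simp [q] at h4
      linarith
    have h5 := second_deriv_nonpos (g' := fun s => ⟪gradient F (x + s • v), v⟫ + c * q' s) hloc
      (hne.mono fun s hs => (SmoothOff.hasDerivAt_line hF x v hs).add ((hq s).const_mul c))
      ((SmoothOff.hasDerivAt_line2 hF x v v (by simpa using hx0)).add (hq'.const_mul c))
    simpa [q'] using h5
  refine ⟨ext_inner_right ℝ fun v => ?_, fun v => ?_⟩
  · rw [inner_smul_left]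
    have := (key v).1
    simp only [conj_trivial]; linarith
  · have := (key v).2
    rw [real_inner_comm] at this
    linarith

namespace FlowData

variable {n : ℕ} {f : Euc n → ℝ} {φ : ℝ → ℝ} {H : ℝ → Euc n → ℝ}

/-! ### The evolution of the speed -/

lemma hasDerivAt_gradient (D : FlowData n f φ H) {t : ℝ} (ht : 0 < t) {x : Euc n} (hx : x ≠ 0) :
    HasDerivAt (fun s => gradient (H s) x) (gradient (dt H t) x) t :=
  ((InnerProductSpace.toDual ℝ (Euc n)).symm.toContinuousLinearEquiv.toContinuousLinearMap
    |>.hasFDerivAt).comp_hasDerivAt t (hasDerivAt_fderiv (isOpen_punct n) D.smooth ht hx)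

lemma hasDerivAt_aOp (D : FlowData n f φ H) {t : ℝ} (ht : 0 < t) {x : Euc n} (hx : x ≠ 0) :
    HasDerivAt (fun s => aOp n (H s) x) (hessOp n (dt H t) x) t := by
  have h1 := hasDerivAt_fderiv (isOpen_punct n) (G := fun t => gradient (H t))
    (gradient_contDiffOn isOpen_Ioi.uniqueDiffOn D.smooth) ht hx
  have h2 : fderiv ℝ (dt (fun t => gradient (H t)) t) x = hessOp n (dt H t) x := by
    refine Filter.EventuallyEq.fderiv_eq ?_
    filter_upwards [(isOpen_punct n).mem_nhds hx] with y hy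
    exact (D.hasDerivAt_gradient ht hy).deriv
  rw [h2] at h1
  exact h1.add_const _

/-- The time derivatives of the weight `a = f/φ(1/h)` and of `φ(1/h)`. -/
lemma hasDerivAt_aDens (D : FlowData n f φ H) {t : ℝ} (ht : 0 < t) {x : Euc n}
    (hx : x ∈ USphere n) : HasDerivAt (fun s => aDens f φ (H s) x)
      (aDens f φ (H t) x * (deriv φ (1 / H t x) / (H t x ^ 2 * φ (1 / H t x)) * dt H t x)) t ∧
    HasDerivAt (fun s => φ (1 / H s x)) (-deriv φ (1 / H t x) / H t x ^ 2 * dt H t x) t := by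
  have hp := (D.body ht).pos x hx
  have hφ := D.φ_inv_pos ht hx
  have h1 : HasDerivAt (fun s => 1 / H s x) (-dt H t x / H t x ^ 2) t := by
    have := (D.hasDerivAt ht (ne_zero_of_mem hx)).inv hp.ne'
    simp only [one_div]
    exact this
  have hin : (1 / H t x) ∈ Ioi (0 : ℝ) := by simpa using hp
  have h2 : HasDerivAt φ (deriv φ (1 / H t x)) (1 / H t x) :=
    ((D.φ_smooth.differentiableOn (by simp)).differentiableAt (isOpen_Ioi.mem_nhds hin)).hasDerivAt
  have h3 : HasDerivAt (fun s => φ (1 / H s x)) (-deriv φ (1 / H t x) / H t x ^ 2 * dt H t x) t := by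
    have := h2.comp t h1
    convert! this using 1
    ring
  refine ⟨?_, h3⟩
  have h4 := (hasDerivAt_const t (f x)).div h3 hφ.ne'
  convert! h4 using 1
  unfold aDens; field_simp; ring

/-- Logarithmic time derivative of `(h - ∂ₜh) φ(1/h) det(∇²h + hI) = η f |∇h|ⁿ`. -/
lemma log_identity (D : FlowData n f φ H) {t : ℝ} (ht : 0 < t) {x : Euc n} (hx : x ∈ USphere n)
    (e : OrthonormalBasis (Fin n) ℝ (Euc n)) {l : Fin n → ℝ} (hl : ∀ i, 0 < l i)
    (he : ∀ i, aOp n (H t) x (e i) = l i • e i) (hdet : sphDet n (H t) x = ∏ i, l i) :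
    (dt H t x - dt (dt H) t x) / (H t x - dt H t x)
      - deriv φ (1 / H t x) / (H t x ^ 2 * φ (1 / H t x)) * dt H t x
      + ∑ i, (l i)⁻¹ * ⟪e i, hessOp n (dt H t) x (e i)⟫ =
    -(∫ y : USphere n, aDens f φ (H t) y * (deriv φ (1 / H t y) / (H t y ^ 2 * φ (1 / H t y)) *
        dt H t y) ∂(sphMeasure n)) / sphInt n (aDens f φ (H t))
      + n * (⟪gradient (H t) x, gradient (dt H t) x⟫ / ‖gradient (H t) x‖ ^ 2) := by
  have hx0 := ne_zero_of_mem hx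
  have hdtc : ContinuousOn (fun p : ℝ × Euc n => aDens f φ (H p.1) p.2 *
      (deriv φ (1 / H p.1 p.2) / (H p.1 p.2 ^ 2 * φ (1 / H p.1 p.2)) * dt H p.1 p.2))
      (Ioi 0 ×ˢ USphere n) := by
    have hφ' : ContinuousOn (deriv φ) (Ioi 0) :=
      (D.φ_smooth.continuousOn_deriv_of_isOpen isOpen_Ioi (by simp))
    exact D.continuousOn_aDens.mul (((D.continuousOn_comp_inv hφ').div ((D.continuousOn_H.pow 2).mul
      (D.continuousOn_comp_inv D.φ_smooth.continuousOn)) fun p hp => mul_ne_zero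
        (pow_ne_zero _ ((D.body hp.1).pos _ hp.2).ne') (D.φ_inv_pos hp.1 hp.2).ne').mul
          D.continuousOn_dt)
  have hI := hasDerivAt_sphInt (G := fun t => aDens f φ (H t)) (G' := fun t x => aDens f φ (H t) x *
      (deriv φ (1 / H t x) / (H t x ^ 2 * φ (1 / H t x)) * dt H t x))
      (fun t ht x hx => (D.hasDerivAt_aDens ht hx).1) D.continuousOn_aDens hdtc ht
  have hid : ∀ s > 0, (H s x - dt H s x) * φ (1 / H s x) * (aOp n (H s) x).det *
      (∫ y : USphere n, aDens f φ (H s) y ∂(sphMeasure n)) =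
      sphArea n * f x * ‖gradient (H s) x‖ ^ n := by
    intro s hs
    have h1 := (D.φ_inv_pos hs hx).ne'
    have h2 := ((D.body hs).sphDet_pos hx).ne'
    have h3 : flowEta n f φ (H s) * (∫ y : USphere n, aDens f φ (H s) y ∂(sphMeasure n)) =
      sphArea n := D.eta_mul hs
    rw [← sphDet_eq, D.flow_eq hs hx, ← h3]
    field_simp
    ring
  have hΦ : ∀ s > 0, 0 < H s x - dt H s x := by
    intro s hs
    rw [D.flow_eq hs hx, sub_sub_cancel]
    have h1 := D.φ_inv_pos hs hx
    have h2 := (D.body hs).sphDet_pos hx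
    have h3 := D.eta_pos hs
    have h4 := D.f_pos x hx
    have h5 := norm_pos_iff.2 ((D.body hs).gradient_ne_zero hx0)
    positivity
  have hr : ∀ s > 0, 0 < ‖gradient (H s) x‖ := fun s hs =>
    norm_pos_iff.2 ((D.body hs).gradient_ne_zero hx0)
  have hdet_pos : ∀ s > 0, 0 < (aOp n (H s) x).det := fun s hs => (D.body hs).sphDet_pos hx
  have hIp : ∀ s > 0, 0 < ∫ y : USphere n, aDens f φ (H s) y ∂(sphMeasure n) :=
    fun s hs => D.intA_pos hs
  have hlog : (fun s => Real.log (H s x - dt H s x) + Real.log (φ (1 / H s x)) +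
      Real.log (aOp n (H s) x).det + Real.log (∫ y : USphere n, aDens f φ (H s) y ∂(sphMeasure n)))
      =ᶠ[𝓝 t] fun s => Real.log (sphArea n * f x) + n / 2 * Real.log (‖gradient (H s) x‖ ^ 2) := by
    filter_upwards [isOpen_Ioi.mem_nhds (mem_Ioi.2 ht)] with s hs
    have hs' : 0 < s := hs
    have a1 := (hΦ s hs').ne'
    have a2 := (D.φ_inv_pos hs' hx).ne'
    have a3 := (hdet_pos s hs').ne'
    have a4 := (hIp s hs').ne'
    rw [← Real.log_mul a1 a2, ← Real.log_mul (by positivity) a3, ← Real.log_mul (by positivity) a4,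
      hid s hs', Real.log_mul (mul_pos (sphArea_pos D.hn) (D.f_pos x hx)).ne'
        (pow_ne_zero _ (hr s hs').ne'), Real.log_pow, Real.log_pow]
    push_cast
    ring
  have d1 := (((D.hasDerivAt ht hx0).sub (hasDerivAt_dt (isOpen_punct n) D.dt_smooth ht hx0)).log
    (hΦ t ht).ne')
  have d2 := (D.hasDerivAt_aDens ht hx).2.log (D.φ_inv_pos ht hx).ne'
  have d3 := (hasDerivAt_det_of_diag (D.hasDerivAt_aOp ht hx0) e hl he).log (hdet_pos t ht).ne'
  have d4 := hI.log (hIp t ht).ne'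
  have d5 := (((D.hasDerivAt_gradient ht hx0).norm_sq.log
    (pow_ne_zero 2 (hr t ht).ne')).const_mul ((n : ℝ) / 2)).const_add (Real.log (sphArea n * f x))
  have huniq := (((d1.add d2).add d3).add d4).unique (d5.congr_of_eventuallyEq hlog)
  have e3 : (aOp n (H t) x).det = ∏ i, l i := hdet
  have hprod : (∏ i, l i) ≠ 0 := (Finset.prod_pos fun i _ => hl i).ne'
  rw [e3, mul_div_cancel_left₀ _ hprod] at huniq
  have e2 : -deriv φ (1 / H t x) / H t x ^ 2 * dt H t x / φ (1 / H t x) =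
      -(deriv φ (1 / H t x) / (H t x ^ 2 * φ (1 / H t x)) * dt H t x) := by
    have := (D.φ_inv_pos ht hx).ne'
    have := ((D.body ht).pos x hx).ne'
    field_simp
  rw [e2] at huniq
  rw [neg_div, sphInt]
  have e5 : (n : ℝ) / 2 * (2 * ⟪gradient (H t) x, gradient (dt H t) x⟫ / ‖gradient (H t) x‖ ^ 2) =
    n * (⟪gradient (H t) x, gradient (dt H t) x⟫ / ‖gradient (H t) x‖ ^ 2) := by ring
  rw [e5] at huniq
  simp only [Pi.sub_apply] at huniq
  linarith

end FlowData

namespace FlowData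

variable {n : ℕ} {f : Euc n → ℝ} {φ : ℝ → ℝ} {H : ℝ → Euc n → ℝ}

/-! ### The maximum principle for the speed -/

/-- Bounds for the logarithmic derivative of `φ(1/h)` in `h` and two-sided bounds for `η f/φ`, once
`w ≤ h ≤ L`. -/
lemma exists_weight_bounds (D : FlowData n f φ H) {w L : ℝ} (hw : 0 < w) (hwL : w ≤ L)
    (hH : ∀ t ≥ 1, ∀ x ∈ USphere n, w ≤ H t x ∧ H t x ≤ L) :
    ∃ B Q : ℝ, 0 < B ∧ 0 < Q ∧ ∀ t ≥ 1, ∀ x ∈ USphere n,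
      |deriv φ (1 / H t x) / (H t x ^ 2 * φ (1 / H t x))| ≤ B ∧
      Q⁻¹ ≤ flowEta n f φ (H t) * aDens f φ (H t) x ∧
      flowEta n f φ (H t) * aDens f φ (H t) x ≤ Q := by
  obtain ⟨m, M, hm, hM, hf⟩ := D.f_bounds
  have hsub : Icc w L ⊆ Ioi 0 := fun s hs => hw.trans_le hs.1
  have hinv : ContinuousOn (fun h : ℝ => 1 / h) (Icc w L) :=
    continuousOn_const.div continuousOn_id fun s hs => (hsub hs).ne'
  have hmaps : MapsTo (fun h : ℝ => 1 / h) (Icc w L) (Ioi 0) := fun s hs => by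
    have := hsub hs; simpa using this
  have hφ : ContinuousOn (fun h : ℝ => φ (1 / h)) (Icc w L) :=
    D.φ_smooth.continuousOn.comp hinv hmaps
  have hφ' : ContinuousOn (fun h : ℝ => deriv φ (1 / h)) (Icc w L) :=
    (D.φ_smooth.continuousOn_deriv_of_isOpen isOpen_Ioi (by simp)).comp hinv hmaps
  have hne : (Icc w L).Nonempty := ⟨w, le_rfl, hwL⟩
  obtain ⟨B, hB⟩ := isCompact_Icc.exists_bound_of_continuousOn
    (hφ'.div ((continuousOn_id.pow 2).mul hφ) fun s hs =>
      mul_ne_zero (pow_ne_zero 2 (hsub hs).ne') (D.φ_pos _ (hmaps hs)).ne')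
  obtain ⟨s1, hs1, hmin⟩ := isCompact_Icc.exists_isMinOn hne hφ
  obtain ⟨s2, hs2, hmax⟩ := isCompact_Icc.exists_isMaxOn hne hφ
  set p1 := φ (1 / s1)
  set p2 := φ (1 / s2)
  have hp1 : 0 < p1 := D.φ_pos _ (hmaps hs1)
  have hp2 : 0 < p2 := D.φ_pos _ (hmaps hs2)
  refine ⟨max B 1, (M / p1) / (m / p2), by positivity, by positivity, fun t ht x hx => ?_⟩
  have ht0 : 0 < t := by linarith
  have ha : ∀ y ∈ USphere n, m / p2 ≤ aDens f φ (H t) y ∧ aDens f φ (H t) y ≤ M / p1 := by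
    intro y hy
    have h1 : p1 ≤ φ (1 / H t y) := hmin (hH t ht y hy)
    have h2 : φ (1 / H t y) ≤ p2 := hmax (hH t ht y hy)
    have h3 := hf y hy
    unfold aDens
    constructor
    · exact div_le_div₀ (by linarith) h3.1 (by linarith) h2
    · exact div_le_div₀ (by linarith) h3.2 hp1 h1
  have hη := D.eta_pos ht0
  have hS := sphArea_pos D.hn
  have hconst : ∀ c : ℝ, ∫ _ : USphere n, c ∂(sphMeasure n) = sphArea n * c := by
    intro c
    rw [integral_const, smul_eq_mul]; rfl
  have hI1 : sphArea n * (m / p2) ≤ sphInt n (aDens f φ (H t)) := by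
    rw [← hconst]
    exact integral_mono (integrable_const _) (D.integrable_aDens ht0) fun y => (ha y y.2).1
  have hI2 : sphInt n (aDens f φ (H t)) ≤ sphArea n * (M / p1) := by
    rw [← hconst]
    exact integral_mono (D.integrable_aDens ht0) (integrable_const _) fun y => (ha y y.2).2
  have hηe := D.eta_mul ht0
  have hη1 : flowEta n f φ (H t) * (m / p2) ≤ 1 := by
    have := mul_le_mul_of_nonneg_left hI1 hη.le
    rw [hηe] at this
    by_contra! hcon
    nlinarith
  have hη2 : 1 ≤ flowEta n f φ (H t) * (M / p1) := by
    have := mul_le_mul_of_nonneg_left hI2 hη.le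
    rw [hηe] at this
    by_contra! hcon
    nlinarith
  refine ⟨(hB _ (hH t ht x hx)).trans (le_max_left _ _), ?_, ?_⟩
  · rw [inv_div, div_le_iff₀ (by positivity)]
    have h1 := (ha x hx).1
    have : 0 < m / p2 := by positivity
    calc m / p2 ≤ m / p2 * (flowEta n f φ (H t) * (M / p1)) := le_mul_of_one_le_right this.le hη2
      _ ≤ aDens f φ (H t) x * (flowEta n f φ (H t) * (M / p1)) := by gcongr
      _ = _ := by ring
  · rw [le_div_iff₀ (by positivity)]
    have h1 := (ha x hx).2
    have : 0 < M / p1 := by positivity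
    calc flowEta n f φ (H t) * aDens f φ (H t) x * (m / p2)
        = aDens f φ (H t) x * (flowEta n f φ (H t) * (m / p2)) := by ring
      _ ≤ aDens f φ (H t) x * 1 := by
        gcongr
        exact (D.aDens_pos ht0 hx).le
      _ ≤ M / p1 := by linarith

/-- The quantity `h - ∂ₜh` is the (positive) speed `η (f/φ) |∇h|ⁿ κ`. -/
lemma speed_eq (D : FlowData n f φ H) {t : ℝ} (ht : 0 < t) {x : Euc n} (hx : x ∈ USphere n) :
    H t x - dt H t x = flowEta n f φ (H t) * aDens f φ (H t) x * ‖gradient (H t) x‖ ^ n *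
      (1 / sphDet n (H t) x) := by
  have h1 := (D.φ_inv_pos ht hx).ne'
  have h2 := ((D.body ht).sphDet_pos hx).ne'
  rw [D.flow_eq ht hx, sub_sub_cancel]
  unfold aDens
  field_simp

lemma speed_pos (D : FlowData n f φ H) {t : ℝ} (ht : 0 < t) {x : Euc n} (hx : x ∈ USphere n) :
    0 < H t x - dt H t x := by
  rw [D.speed_eq ht hx]
  have h2 := (D.body ht).sphDet_pos hx
  have h3 := D.eta_pos ht
  have h4 := D.aDens_pos ht hx
  have h5 := norm_pos_iff.2 ((D.body ht).gradient_ne_zero (ne_zero_of_mem hx))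
  positivity

/-- At a point where the speed first touches `K (h - ε)`, the trace of the inverse of the
curvature matrix is bounded independently of `K`. -/
lemma trace_bound (D : FlowData n f φ H) {w L B ε K : ℝ} (hw : 0 < w)
    (hH : ∀ t ≥ 1, ∀ x ∈ USphere n, w ≤ H t x ∧ H t x ≤ L) (hB : 0 < B)
    (hφB : ∀ t ≥ 1, ∀ x ∈ USphere n, |deriv φ (1 / H t x) / (H t x ^ 2 * φ (1 / H t x))| ≤ B)
    (hε : 0 < ε) (hε1 : ε ≤ w / 2) (hε2 : ε ≤ 1 / 8) (hK : 2 ≤ K)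
    {t : ℝ} (ht : 1 < t) {x : Euc n} (hx : x ∈ USphere n)
    (h0 : H t x - dt H t x - K * (H t x - ε) = 0)
    (hle : ∀ y ∈ USphere n, H t y - dt H t y - K * (H t y - ε) ≤ 0)
    (hbef : ∀ s ∈ Ico 1 t, H s x - dt H s x - K * (H s x - ε) < 0)
    (e : OrthonormalBasis (Fin n) ℝ (Euc n)) {l : Fin n → ℝ} (hl : ∀ i, 0 < l i)
    (he : ∀ i, aOp n (H t) x (e i) = l i • e i) (hdet : sphDet n (H t) x = ∏ i, l i) :
    ∑ i, (l i)⁻¹ ≤ (1 + 4 * L * B + 2 * n) / ε := by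
  have ht0 : 0 < t := by linarith
  have hx0 := ne_zero_of_mem hx
  have hn0 : (2 : ℝ) ≤ n := by exact_mod_cast D.hn
  have hHx := hH t ht.le x hx
  have hlog := D.log_identity ht0 hx e hl he hdet
  -- spatial conditions
  have hsH : ContDiffOn ℝ (⊤ : ℕ∞) (H t) {(0 : Euc n)}ᶜ := (D.body ht0).smooth
  have hsψ : ContDiffOn ℝ (⊤ : ℕ∞) (dt H t) {(0 : Euc n)}ᶜ :=
    D.dt_smooth.comp (contDiffOn_const.prodMk contDiffOn_id) fun y hy => ⟨ht0, hy⟩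
  have hsF : ContDiffOn ℝ (⊤ : ℕ∞) (fun y => (1 - K) * H t y - dt H t y) {(0 : Euc n)}ᶜ :=
    (contDiffOn_const.mul hsH).sub hsψ
  have hgF : ∀ y : Euc n, y ≠ 0 → gradient (fun y => (1 - K) * H t y - dt H t y) y =
      (1 - K) • gradient (H t) y - gradient (dt H t) y := by
    intro y hy
    have d1 : DifferentiableAt ℝ (H t) y :=
      (hsH.differentiableOn (by simp)).differentiableAt ((isOpen_punct n).mem_nhds hy)
    have d2 : DifferentiableAt ℝ (dt H t) y :=
      (hsψ.differentiableOn (by simp)).differentiableAt ((isOpen_punct n).mem_nhds hy)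
    simp only [gradient]
    rw [fderiv_fun_sub (d1.const_mul _) d2, fderiv_const_mul d1, map_sub]
    simp
  have hhF : hessOp n (fun y => (1 - K) * H t y - dt H t y) x =
      (1 - K) • hessOp n (H t) x - hessOp n (dt H t) x := by
    have d1 : HasFDerivAt (gradient (H t)) (hessOp n (H t) x) x :=
      SmoothOff.hasFDerivAt_gradient hsH hx0
    have d2 : HasFDerivAt (gradient (dt H t)) (hessOp n (dt H t) x) x :=
      SmoothOff.hasFDerivAt_gradient hsψ hx0
    refine HasFDerivAt.fderiv (((d1.const_smul (1 - K)).sub d2).congr_of_eventuallyEq ?_)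
    filter_upwards [(isOpen_punct n).mem_nhds hx0] with y hy using hgF y hy
  have hleF : ∀ y : Euc n, y ≠ 0 → ((1 - K) * H t y - dt H t y) + K * ε * ‖y‖ ≤ 0 := by
    intro y hy
    have hny : 0 < ‖y‖ := norm_pos_iff.2 hy
    have hu : ‖y‖⁻¹ • y ∈ USphere n := by simp [norm_smul, hy]
    have hy' : y = ‖y‖ • (‖y‖⁻¹ • y) := by rw [smul_smul, mul_inv_cancel₀ hny.ne', one_smul]
    have h1 : H t y = ‖y‖ * H t (‖y‖⁻¹ • y) := by
      rw [← (D.body ht0).homog _ hny, ← hy']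
    have h2 : dt H t y = ‖y‖ * dt H t (‖y‖⁻¹ • y) := by
      rw [← D.dt_homog ht0 hny, ← hy']
    rw [h1, h2]
    have := mul_le_mul_of_nonneg_left (hle _ hu) hny.le
    linarith
  obtain ⟨hgrad, hhess⟩ := touching_conditions hsF (c := K * ε) (by positivity) hleF hx
    (by linarith)
  rw [hgF x hx0] at hgrad
  have hgψ : gradient (dt H t) x = (1 - K) • gradient (H t) x + (K * ε) • x := by
    have : gradient (dt H t) x = (1 - K) • gradient (H t) x - -(K * ε) • x := by
      rw [← hgrad]; abel
    rw [this]; module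
  have hterm : ∀ i, (1 - K) + K * ε * (l i)⁻¹ ≤ (l i)⁻¹ * ⟪e i, hessOp n (dt H t) x (e i)⟫ := by
    intro i
    have h1 := hhess (e i)
    rw [hhF] at h1
    have h2 : ⟪e i, hessOp n (H t) x (e i)⟫ = l i - ⟪x, e i⟫ ^ 2 := by
      have h3 := he i
      rw [aOp_apply] at h3
      rw [eq_sub_of_add_eq h3, inner_sub_right, inner_smul_right, inner_smul_right,
        real_inner_self_eq_norm_sq, e.norm_eq_one, real_inner_comm]
      ring
    simp only [sub_apply, smul_apply, inner_sub_right,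
      inner_smul_right, e.norm_eq_one, h2] at h1
    have h4 : (1 - K) * l i + K * ε ≤ ⟪e i, hessOp n (dt H t) x (e i)⟫ := by
      have : K * ε ≤ K * (1 / 8) := by gcongr
      nlinarith [sq_nonneg ⟪x, e i⟫]
    have h5 := mul_le_mul_of_nonneg_left h4 (inv_pos.2 (hl i)).le
    have h6 : (l i)⁻¹ * ((1 - K) * l i + K * ε) = (1 - K) + K * ε * (l i)⁻¹ := by
      have := (hl i).ne'
      field_simp
    linarith
  have hsum : n * (1 - K) + K * ε * ∑ i, (l i)⁻¹ ≤
      ∑ i, (l i)⁻¹ * ⟪e i, hessOp n (dt H t) x (e i)⟫ := by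
    have := Finset.sum_le_sum fun i (_ : i ∈ Finset.univ) => hterm i
    rw [Finset.sum_add_distrib, ← Finset.mul_sum] at this
    simp only [Finset.sum_const, Finset.card_univ, Fintype.card_fin, nsmul_eq_mul] at this
    exact this
  -- time derivative at the first touching time
  have hPpos : 0 < H t x - ε := by linarith
  have htime : -K ≤ (dt H t x - dt (dt H) t x) / (H t x - dt H t x) := by
    have hd := (((D.hasDerivAt ht0 hx0).sub (hasDerivAt_dt (isOpen_punct n) D.dt_smooth ht0
      hx0)).sub (((D.hasDerivAt ht0 hx0).sub_const ε).const_mul K))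
    have h1 := deriv_nonneg_of_left ht hd fun s hs => by
      have := hbef s hs
      simp only [Pi.sub_apply]
      linarith
    rw [le_div_iff₀ (D.speed_pos ht0 hx)]
    have h2 : 0 < K * H t x := by nlinarith
    nlinarith
  -- bounds for the lower-order terms
  have hdt : ∀ y ∈ USphere n, |dt H t y| ≤ 2 * K * L := by
    intro y hy
    have h1 := D.speed_pos ht0 hy
    have h2 := hle y hy
    have h3 := hH t ht.le y hy
    rw [abs_le]
    constructor <;> nlinarith
  have hz : ∀ y ∈ USphere n,
      |deriv φ (1 / H t y) / (H t y ^ 2 * φ (1 / H t y)) * dt H t y| ≤ B * (2 * K * L) := by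
    intro y hy
    rw [abs_mul]
    exact mul_le_mul (hφB t ht.le y hy) (hdt y hy) (abs_nonneg _) hB.le
  have hIz : -(∫ y : USphere n, aDens f φ (H t) y * (deriv φ (1 / H t y) /
      (H t y ^ 2 * φ (1 / H t y)) * dt H t y) ∂(sphMeasure n)) / sphInt n (aDens f φ (H t)) ≤
      B * (2 * K * L) := by
    rw [div_le_iff₀ (D.intA_pos ht0)]
    refine (neg_le_abs _).trans ?_
    have h1 := norm_integral_le_of_norm_le (μ := sphMeasure n)
      (f := fun y : USphere n => aDens f φ (H t) y * (deriv φ (1 / H t y) /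
        (H t y ^ 2 * φ (1 / H t y)) * dt H t y))
      ((D.integrable_aDens ht0).const_mul (B * (2 * K * L))) (ae_of_all _ fun y => by
        rw [norm_mul, Real.norm_of_nonneg (D.aDens_pos ht0 y.2).le, mul_comm]
        exact mul_le_mul_of_nonneg_right (hz y y.2) (D.aDens_pos ht0 y.2).le)
    rw [integral_const_mul] at h1
    exact h1
  have hr0 : 0 < ‖gradient (H t) x‖ := norm_pos_iff.2 ((D.body ht0).gradient_ne_zero hx0)
  have hrad : ⟪gradient (H t) x, gradient (dt H t) x⟫ / ‖gradient (H t) x‖ ^ 2 ≤ K := by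
    have h1 := (D.body ht0).le_norm_gradient hx
    rw [div_le_iff₀ (by positivity), hgψ, inner_add_right, inner_smul_right, inner_smul_right,
      real_inner_self_eq_norm_sq, (D.body ht0).euler hx0]
    have h2 : ε * H t x ≤ ‖gradient (H t) x‖ ^ 2 := by nlinarith
    nlinarith [mul_le_mul_of_nonneg_left h2 (by linarith : 0 ≤ K)]
  have hzx := (abs_le.1 (hz x hx)).2
  have hrad' := mul_le_mul_of_nonneg_left hrad (by positivity : (0 : ℝ) ≤ n)
  rw [le_div_iff₀ hε]
  have hfin : K * ((∑ i, (l i)⁻¹) * ε) ≤ K * (1 + 4 * L * B + 2 * n) := by nlinarith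
  exact le_of_mul_le_mul_left hfin (by linarith)

/-- The speed is bounded on `[1, ∞)`. -/
lemma exists_speed_bound (D : FlowData n f φ H) {w L B Q : ℝ} (hw : 0 < w) (hwL : w ≤ L)
    (hH : ∀ t ≥ 1, ∀ x ∈ USphere n, w ≤ H t x ∧ H t x ≤ L) (hB : 0 < B) (hQ : 0 < Q)
    (hbd : ∀ t ≥ 1, ∀ x ∈ USphere n,
      |deriv φ (1 / H t x) / (H t x ^ 2 * φ (1 / H t x))| ≤ B ∧
      Q⁻¹ ≤ flowEta n f φ (H t) * aDens f φ (H t) x ∧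
      flowEta n f φ (H t) * aDens f φ (H t) x ≤ Q) :
    ∃ C : ℝ, 0 < C ∧ ∀ t ≥ 1, ∀ x ∈ USphere n, H t x - dt H t x ≤ C := by
  have hL : 0 < L := hw.trans_le hwL
  set ε := min (w / 2) (1 / 8) with hεdef
  have hε : 0 < ε := by positivity
  have hε1 : ε ≤ w / 2 := min_le_left _ _
  have hε2 : ε ≤ 1 / 8 := min_le_right _ _
  have hcont : ContinuousOn (fun p : ℝ × Euc n => H p.1 p.2 - dt H p.1 p.2)
      (Ici 1 ×ˢ USphere n) :=
    (D.continuousOn_H.sub D.continuousOn_dt).mono (prod_mono (fun s hs =>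
      mem_Ioi.2 (lt_of_lt_of_le one_pos hs)) subset_rfl)
  obtain ⟨C1, hC1, hC1b⟩ := exists_bound_slab (a := 1) (b := 1) (G := fun t x => H t x - dt H t x)
    (hcont.mono (prod_mono Icc_subset_Ici_self subset_rfl))
  set T := (1 + 4 * L * B + 2 * n) / ε
  have hT : 0 < T := by positivity
  -- `K` exceeds both the initial ratio and the ratio forced at a first touching point
  set K := 2 + 2 / w * (C1 + Q * L ^ n * T ^ n) with hKdef
  have hK : 2 ≤ K := by
    have : 0 < 2 / w * (C1 + Q * L ^ n * T ^ n) := by positivity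
    linarith
  have hKw : C1 + Q * L ^ n * T ^ n < K * (w / 2) := by
    have : K * (w / 2) = w + (C1 + Q * L ^ n * T ^ n) := by rw [hKdef]; field_simp
    linarith
  have hQLT : 0 < Q * L ^ n * T ^ n := by positivity
  have hneg : ∀ t ≥ 1, ∀ x ∈ USphere n, H t x - dt H t x - K * (H t x - ε) < 0 := by
    by_contra! hcon
    obtain ⟨t1, ht1, x1, hx1, hpos1⟩ := hcon
    have hZ : ContinuousOn (fun p : ℝ × Euc n => H p.1 p.2 - dt H p.1 p.2 - K * (H p.1 p.2 - ε))
        (Ici 1 ×ˢ USphere n) :=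
      hcont.sub (continuousOn_const.mul ((D.continuousOn_H.mono (prod_mono (fun s hs =>
        mem_Ioi.2 (lt_of_lt_of_le one_pos hs)) subset_rfl)).sub continuousOn_const))
    obtain ⟨t, ht, x, hx, h0, hle, hbef⟩ := exists_first_time (isCompact_sphere (0 : Euc n) 1)
      (Z := fun t x => H t x - dt H t x - K * (H t x - ε)) hZ (fun x hx => by
        have h1 := (abs_le.1 (hC1b 1 ⟨le_rfl, le_rfl⟩ x hx)).2
        have h2 := (hH 1 le_rfl x hx).1
        have h3 : K * (w / 2) ≤ K * (H 1 x - ε) := by gcongr; linarith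
        linarith) ht1 hx1 hpos1
    have ht0 : 0 < t := by linarith
    obtain ⟨e, l, hl, he, hdet⟩ := (D.body ht0).exists_eigenbasis hx
    have htr := D.trace_bound hw hH hB (fun t ht x hx => (hbd t ht x hx).1) hε hε1 hε2 hK ht hx h0
      hle hbef e hl he hdet
    have hκ : 1 / sphDet n (H t) x ≤ T ^ n := by
      rw [hdet, one_div, ← Finset.prod_inv_distrib]
      calc ∏ i, (l i)⁻¹ ≤ ∏ _i : Fin n, T :=
            Finset.prod_le_prod (fun i _ => (inv_pos.2 (hl i)).le) fun i _ =>
              (Finset.single_le_sum (f := fun i => (l i)⁻¹)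
                (fun j _ => (inv_pos.2 (hl j)).le) (Finset.mem_univ i)).trans htr
        _ = T ^ n := by simp
    have hsp : H t x - dt H t x ≤ Q * L ^ n * T ^ n := by
      rw [D.speed_eq ht0 hx]
      have h1 := (D.body ht0).norm_gradient_le (fun y hy => (hH t ht.le y hy).2) hx
      have h2 := (hbd t ht.le x hx).2.2
      have h3 : 0 ≤ 1 / sphDet n (H t) x := by
        have := (D.body ht0).sphDet_pos hx; positivity
      gcongr
    have h2 := (hH t ht.le x hx).1
    have h3 : K * (w / 2) ≤ K * (H t x - ε) := by gcongr; linarith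
    linarith
  refine ⟨K * L, by positivity, fun t ht x hx => ?_⟩
  have h1 := hneg t ht x hx
  have h2 := (hH t ht x hx).2
  nlinarith

end FlowData

/-! ### The curvature bound -/

/-- uniform upper bound on the Gauss curvature `κ = 1/det(∇²h + hI)`. -/
theorem gauss_curvature_upper_bound
    (n : ℕ) (hn : 2 ≤ n)
    (f : Euc n → ℝ) (φ : ℝ → ℝ) (h₀ : Euc n → ℝ)
    (hf_smooth : ContDiffOn ℝ (⊤ : ℕ∞) f {(0 : Euc n)}ᶜ)
    (hf_pos : ∀ x ∈ USphere n, 0 < f x)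
    (hf_even : ∀ x : Euc n, f (-x) = f x)
    (hφ_smooth : ContDiffOn ℝ (⊤ : ℕ∞) φ (Ioi 0))
    (hφ_pos : ∀ s ∈ Ioi (0 : ℝ), 0 < φ s)
    (hh₀ : IsSupportFn n h₀) (hh₀e : ∀ x : Euc n, h₀ (-x) = h₀ x)
    (hcond : CondI n f φ h₀ ∨ CondII φ)
    (H : ℝ → Euc n → ℝ) (hH : IsFlowSol n f φ (Ici 0) H) (hH0 : H 0 = h₀) :
    ∃ C : ℝ, 0 < C ∧ ∀ t ∈ Ioi (0 : ℝ), ∀ x ∈ USphere n,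
      1 / sphDet n (H t) x ≤ C := by
  have D : FlowData n f φ H := ⟨hn, hf_smooth, hf_pos, hφ_smooth, hφ_pos, hH⟩
  obtain ⟨w, L, hw, hwL, hb⟩ := D.exists_C0_bounds hcond
  obtain ⟨B, Q, hB, hQ, hbd⟩ := D.exists_weight_bounds hw hwL hb
  obtain ⟨C1, hC1, hsp⟩ := D.exists_speed_bound hw hwL hb hB hQ hbd
  have hdet0 : ∀ t ≥ 0, ∀ x ∈ USphere n, 0 < sphDet n (H t) x := fun t ht x hx =>
    (hH.body t ht).sphDet_pos hx
  -- on `[0, 1]` compactness suffices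
  obtain ⟨C2, hC2, hsmall⟩ := exists_bound_slab (a := 0) (b := 1)
    (G := fun t x => 1 / sphDet n (H t) x) (continuousOn_const.div
      ((sphDet_continuousOn (uniqueDiffOn_Ici 0) hH.smooth).mono
        (prod_mono Icc_subset_Ici_self (sphere_sub n))) fun p hp => (hdet0 _ hp.1.1 _ hp.2).ne')
  refine ⟨max C2 (C1 * Q / w ^ n), lt_max_of_lt_left hC2, fun t ht x hx => ?_⟩
  have ht0 : 0 < t := ht
  rcases le_total t 1 with h1 | h1
  · exact ((abs_le.1 (hsmall t ⟨ht0.le, h1⟩ x hx)).2).trans (le_max_left _ _)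
  · refine le_trans ?_ (le_max_right _ _)
    have h2 := hsp t h1 x hx
    rw [D.speed_eq ht0 hx] at h2
    have h3 : w ≤ ‖gradient (H t) x‖ :=
      (hb t h1 x hx).1.trans ((D.body ht0).le_norm_gradient hx)
    have h4 := (hbd t h1 x hx).2.1
    have hκ : 0 ≤ 1 / sphDet n (H t) x := (one_div_pos.2 (hdet0 t ht0.le x hx)).le
    have h5 : Q⁻¹ * w ^ n * (1 / sphDet n (H t) x) ≤ C1 := by
      refine le_trans ?_ h2
      have := (inv_pos.2 hQ).le.trans h4
      gcongr
    rw [le_div_iff₀ (by positivity)]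
    calc 1 / sphDet n (H t) x * w ^ n = Q * (Q⁻¹ * w ^ n * (1 / sphDet n (H t) x)) := by
          field_simp
      _ ≤ Q * C1 := by gcongr
      _ = C1 * Q := mul_comm _ _
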